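/- Let n ≥ 2, let 𝓘 = {f₁,…,f_N} and 𝓙 = {g₁,…,g_N} be iterated function systems of contracting similarities of ℝⁿ satisfying the strong separation condition on bounded open sets Q and S respectively, and let φ : ℝⁿ \ (⋃ᵢ fᵢ(Q)) → ℝⁿ \ (⋃ᵢ gᵢ(S)) be a quasiconformal homeomorphism satisfying the compatibility condition: there exists ε > 0 such that φ(fᵢ(y)) = gᵢ(φ(y)) for every i = 1,…,N and every y ∈ ℝⁿ \ Q with dist(y, Q) ≤ ε. Then there exists a quasiconformal homeomorphism Φ : ℝⁿ → ℝⁿ such that Φ agrees with φ on ℝⁿ \ (⋃ᵢ fᵢ(Q)), Φ(fᵢ(x)) = gᵢ(Φ(x)) for every i and every x in the closure of Q, and Φ maps the invariant set K_𝓘 onto the invariant set K_𝓙. -/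

import Mathlib

open Set Metric Filter MeasureTheory
open scoped ENNReal Topology NNReal

noncomputable section

/-- `L_Φ(x,r) = sup {|Φ(x) - Φ(y)| : y ∈ Ω, |x - y| ≤ r}`. -/
noncomputable def linDil {X : Type*} [MetricSpace X] (Ω : Set X) (Φ : X → X) (x : X) (r : ℝ) :
    ℝ≥0∞ :=
  ⨆ y ∈ {y | y ∈ Ω ∧ dist x y ≤ r}, edist (Φ x) (Φ y)

/-- `l_Φ(x,r) = inf {|Φ(x) - Φ(y)| : y ∈ Ω, |x - y| ≥ r}`. -/
noncomputable def linCon {X : Type*} [MetricSpace X] (Ω : Set X) (Φ : X → X) (x : X) (r : ℝ) :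
    ℝ≥0∞ :=
  ⨅ y ∈ {y | y ∈ Ω ∧ r ≤ dist x y}, edist (Φ x) (Φ y)

/-- `H_Φ(x) = limsup_{r → 0⁺} L_Φ(x,r) / l_Φ(x,r)`. -/
noncomputable def qcH {X : Type*} [MetricSpace X] (Ω : Set X) (Φ : X → X) (x : X) : ℝ≥0∞ :=
  Filter.limsup (fun r : ℝ => linDil Ω Φ x r / linCon Ω Φ x r) (𝓝[>] (0 : ℝ))

/-- A map `Φ`, viewed as a map of `Ω` into `X`, is quasiconformal if `H_Φ(x) ≤ H` for all
`x ∈ Ω`, for some finite `H ≥ 1`. -/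
def QuasiconformalOn {X : Type*} [MetricSpace X] (Ω : Set X) (Φ : X → X) : Prop :=
  ∃ H : ℝ, 1 ≤ H ∧ ∀ x ∈ Ω, qcH Ω Φ x ≤ ENNReal.ofReal H

/-- `Φ` restricts to a homeomorphism of `Ω` onto `Ω'`. -/
def IsHomeoOn {X : Type*} [TopologicalSpace X] (Φ : X → X) (Ω Ω' : Set X) : Prop :=
  ∃ e : Ω ≃ₜ Ω', ∀ x : Ω, (e x : X) = Φ (x : X)

/-- `f` is a similarity with ratio `r`. -/
def IsSimilarityWith {X : Type*} [MetricSpace X] (r : ℝ) (f : X → X) : Prop :=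
  0 < r ∧ ∀ x y, dist (f x) (f y) = r * dist x y

/-- The strong separation condition for the iterated function system `f` on the set `Q`:
each `f i` maps the closure of `Q` into `Q`, and the images of the closure of `Q` are
pairwise disjoint. -/
def StrongSeparation {X : Type*} [MetricSpace X] {ι : Type*} (f : ι → X → X) (Q : Set X) :
    Prop :=
  (∀ i, f i '' closure Q ⊆ Q) ∧
    ∀ i j, i ≠ j → Disjoint (f i '' closure Q) (f j '' closure Q)

/-- `f_σ = f_{σ₁} ∘ ⋯ ∘ f_{σ_k}` for a finite word `σ`. -/
def iterComp {X ι : Type*} (f : ι → X → X) : List ι → X → X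
  | [] => id
  | i :: w => f i ∘ iterComp f w

/-- The invariant set `K = ⋂_k ⋃_{|σ| = k} f_σ(closure Q)` of an iterated function system. -/
def invariantSet {X : Type*} [MetricSpace X] {ι : Type*} (f : ι → X → X) (Q : Set X) :
    Set X :=
  ⋂ k : ℕ, ⋃ w : Fin k → ι, iterComp f (List.ofFn w) '' closure Q

/-- The distance between two subsets of a metric space. -/
noncomputable def setDist {X : Type*} [MetricSpace X] (A B : Set X) : ℝ :=
  sInf ((fun p : X × X => dist p.1 p.2) '' A ×ˢ B)

end

/-!
The compatibility condition says nothing about `S` near its own frontier, so `S` is first replaced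
by `S' = (φ '' Qᶜ)ᶜ`. By Brouwer's invariance of domain `φ` maps `frontier Q` onto `frontier S'`,
and the number of sets `g i '' S'` containing a point, minus the indicator of `⋃ i, g i '' S`, is
locally constant; it vanishes far away, so the `g i '' S'` are disjoint with union `⋃ i, g i '' S`.
The pasting problem is now symmetric in the two systems.

The extension `Φ` is the fixed point of the contraction replacing `Ψ` by `g i ∘ Ψ ∘ (f i)⁻¹` on
`f i '' closure Q`, and its inverse is the extension of the symmetric problem. Off the invariant
set `K` the similarities carry the dilatation of `φ` along. At a point of `K`, a small ball is blown
up by the inverse of a composition of the `f i` to a ball of definite size centred on `K`, where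
compactness bounds the dilatation.
-/

open scoped Function

/-! ### Jacobian integrals -/

open Polynomial in
theorem exists_polynomial_eval_eq_det_one_add_smul {R M : Type*} [CommRing R] [Nontrivial R]
    [AddCommGroup M] [Module R M] [Module.Free R M] [Module.Finite R M] (A : M →ₗ[R] M) :
    ∃ p : R[X], p.natDegree ≤ Module.finrank R M ∧
      ∀ t : R, p.eval t = LinearMap.det (1 + t • A) := by
  classical
  let b := Module.Free.chooseBasis R M
  let B := LinearMap.toMatrix b b A
  refine ⟨((X : R[X]) • B.map C + (1 : Matrix _ _ R).map C).det, ?_, fun t ↦ ?_⟩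
  · rw [Module.finrank_eq_card_chooseBasisIndex]
    exact natDegree_det_X_add_C_le B 1
  · rw [← coe_evalRingHom, RingHom.map_det, ← LinearMap.det_toMatrix b,
      map_add (LinearMap.toMatrix b b), map_smul, LinearMap.toMatrix_one]
    congr 1
    ext i j
    obtain rfl | h := eq_or_ne i j
    · simp [B, mul_comm t, add_comm (1 : R)]
    · simp [B, h, mul_comm t]

theorem exists_weights_eval_eq_sum {K : Type*} [Field K] {s : Set K} (hs : s.Infinite) (d : ℕ)
    (a : K) :
    ∃ (t : Finset K) (w : K → K), ↑t ⊆ s ∧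
      ∀ p : Polynomial K, p.natDegree ≤ d → p.eval a = ∑ x ∈ t, w x * p.eval x := by
  classical
  obtain ⟨t, hts, htcard⟩ := hs.exists_subset_card_eq (d + 1)
  refine ⟨t, fun x ↦ (Lagrange.basis t id x).eval a, hts, fun p hp ↦ ?_⟩
  have hdeg : p.degree < (t.card : WithBot ℕ) := by
    rw [htcard]
    exact Polynomial.degree_le_natDegree.trans_lt (by exact_mod_cast Nat.lt_succ_of_le hp)
  conv_lhs => rw [Lagrange.eq_interpolate (injOn_id _) hdeg]
  simp only [Lagrange.interpolate_apply, Polynomial.eval_finsetSum, Polynomial.eval_mul,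
    Polynomial.eval_C, id_eq, mul_comm]

theorem det_id_add_pos {E : Type*} [NormedAddCommGroup E] [NormedSpace ℝ E]
    [FiniteDimensional ℝ E] {A : E →L[ℝ] E} (hA : ‖A‖ < 1) :
    0 < (ContinuousLinearMap.id ℝ E + A).det := by
  have := FiniteDimensional.complete ℝ E
  let d : ℝ → ℝ := fun t ↦ (ContinuousLinearMap.id ℝ E + t • A).det
  have hd : Continuous d := ContinuousLinearMap.continuous_det.comp (by fun_prop)
  have hne : ∀ t ∈ Icc (0 : ℝ) 1, d t ≠ 0 := fun t ht ↦ by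
    have hnorm : ‖-(t • A)‖ < 1 := by
      rw [norm_neg, norm_smul, Real.norm_of_nonneg ht.1]
      exact (mul_le_of_le_one_left (norm_nonneg A) ht.2).trans_lt hA
    have hunit : IsUnit (ContinuousLinearMap.id ℝ E + t • A) := by
      have h := isUnit_one_sub_of_norm_lt_one hnorm
      rwa [sub_neg_eq_add] at h
    exact ((hunit.map ContinuousLinearMap.toLinearMapRingHom).map LinearMap.det).ne_zero
  by_contra! hle
  obtain ⟨t, ht, ht0⟩ := intermediate_value_Icc' zero_le_one hd.continuousOn
    (show (0 : ℝ) ∈ Icc (d 1) (d 0) by simpa [d, ContinuousLinearMap.det] using hle)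
  exact hne t ht ht0

theorem inter_frontier_nonempty_of_isPreconnected {X : Type*} [TopologicalSpace X] {s t : Set X}
    (ht : IsPreconnected t) (hin : (t ∩ s).Nonempty) (hout : (t ∩ sᶜ).Nonempty) :
    (t ∩ frontier s).Nonempty := by
  obtain ⟨x, hxt, hxs⟩ := hin
  obtain ⟨y, hyt, hys⟩ := hout
  by_contra! h
  have hdisj : ∀ z ∈ t, z ∈ closure s → z ∈ interior s := fun z hz hzs ↦ by
    by_contra hzi
    exact h.subset ⟨hz, hzs, hzi⟩
  obtain ⟨z, -, hzi, hzc⟩ := ht (interior s) (closure s)ᶜ isOpen_interior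
    isClosed_closure.isOpen_compl (fun z hz ↦ or_iff_not_imp_right.2 fun hzc ↦
      hdisj z hz (not_not.1 hzc))
    ⟨x, hxt, hdisj x hxt (subset_closure hxs)⟩
    ⟨y, hyt, fun hyc ↦ hys (interior_subset (hdisj y hyt hyc))⟩
  exact hzc (interior_subset_closure hzi)

theorem lipschitzWith_indicator {E F : Type*} [NormedAddCommGroup E] [NormedSpace ℝ E]
    [NormedAddCommGroup F] {s : Set E} {v : E → F} {K : ℝ≥0} (hv : LipschitzOnWith K v s)
    (hs : IsClosed s) (h0 : ∀ x ∈ frontier s, v x = 0) : LipschitzWith K (s.indicator v) := by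
  have key : ∀ x ∈ s, ∀ y ∉ s, dist (s.indicator v x) (s.indicator v y) ≤ K * dist x y := by
    intro x hx y hy
    obtain ⟨z, hz, hzs⟩ := inter_frontier_nonempty_of_isPreconnected
      (convex_segment x y).isPreconnected ⟨x, left_mem_segment ℝ x y, hx⟩
      ⟨y, right_mem_segment ℝ x y, hy⟩
    rw [indicator_of_mem hx, indicator_of_notMem hy, ← h0 z hzs]
    have hxz : dist x z ≤ dist x y := by
      rw [← dist_add_dist_of_mem_segment hz]
      exact le_add_of_nonneg_right dist_nonneg
    exact (hv.dist_le_mul x hx z (hs.frontier_subset hzs)).trans (by gcongr)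
  refine LipschitzWith.of_dist_le_mul fun x y ↦ ?_
  by_cases hx : x ∈ s <;> by_cases hy : y ∈ s
  · simpa only [indicator_of_mem, hx, hy] using hv.dist_le_mul x hx y hy
  · exact key x hx y hy
  · rw [dist_comm, dist_comm x]
    exact key y hy x hx
  · rw [indicator_of_notMem hx, indicator_of_notMem hy, dist_self]
    positivity

theorem bijective_id_add_of_lipschitzWith {E : Type*} [NormedAddCommGroup E] [CompleteSpace E]
    {w : E → E} {K : ℝ≥0} (hw : LipschitzWith K w) (hK : K < 1) :
    Function.Bijective (fun x ↦ x + w x) := by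
  refine (Function.bijective_iff_existsUnique _).2 fun y ↦ ?_
  have hc : ContractingWith K (fun x ↦ y - w x) :=
    ⟨hK, LipschitzWith.of_dist_le_mul fun a b ↦ by
      rw [dist_sub_left]
      exact hw.dist_le_mul a b⟩
  have hfix : ∀ x, x + w x = y ↔ Function.IsFixedPt (fun x ↦ y - w x) x := fun x ↦ by
    rw [Function.IsFixedPt, sub_eq_iff_eq_add, eq_comm]
  exact ⟨hc.fixedPoint, (hfix _).2 hc.fixedPoint_isFixedPt, fun x hx ↦
    hc.fixedPoint_unique ((hfix x).1 hx)⟩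

theorem bijOn_id_add_of_lipschitzOnWith {E : Type*} [NormedAddCommGroup E] [NormedSpace ℝ E]
    [CompleteSpace E] {s : Set E} {v : E → E} {K : ℝ≥0} (hv : LipschitzOnWith K v s)
    (hK : K < 1) (hs : IsClosed s) (h0 : ∀ x ∈ frontier s, v x = 0) :
    BijOn (fun x ↦ x + v x) s s := by
  have hbij := bijective_id_add_of_lipschitzWith (lipschitzWith_indicator hv hs h0) hK
  have hin : EqOn (fun x ↦ x + s.indicator v x) (fun x ↦ x + v x) s := fun x hx ↦ by
    simp only [indicator_of_mem hx]
  have hout : (fun x ↦ x + s.indicator v x) '' sᶜ = sᶜ := by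
    rw [image_congr (g := id) (fun x hx ↦ by rw [indicator_of_notMem hx, add_zero, id]), image_id]
  have himage : (fun x ↦ x + s.indicator v x) '' s = s := by
    rw [← compl_inj_iff, ← image_compl_eq hbij, hout]
  have hbijOn := hbij.injective.injOn.bijOn_image (s := s)
  rw [himage] at hbijOn
  exact hbijOn.congr hin

theorem exists_weights_det_id_add_eq_sum (E : Type*) [NormedAddCommGroup E] [NormedSpace ℝ E]
    [FiniteDimensional ℝ E] {s : Set ℝ} (hs : s.Infinite) :
    ∃ (T : Finset ℝ) (w : ℝ → ℝ), ↑T ⊆ s ∧ ∑ t ∈ T, w t = 1 ∧ ∀ A : E →L[ℝ] E,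
      (ContinuousLinearMap.id ℝ E + A).det =
        ∑ t ∈ T, w t * (ContinuousLinearMap.id ℝ E + t • A).det := by
  obtain ⟨T, w, hT, hw⟩ := exists_weights_eval_eq_sum hs (Module.finrank ℝ E) 1
  refine ⟨T, w, hT, ?_, fun A ↦ ?_⟩
  · simpa only [Polynomial.eval_one, mul_one] using
      (hw 1 (Polynomial.natDegree_one.trans_le (Nat.zero_le _))).symm
  · obtain ⟨p, hp, hpA⟩ := exists_polynomial_eval_eq_det_one_add_smul (A : E →ₗ[ℝ] E)
    have h := hw p hp
    simp only [hpA, one_smul] at h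
    exact h

section Jacobian

variable {E : Type*} [NormedAddCommGroup E] [NormedSpace ℝ E] [FiniteDimensional ℝ E]
  [MeasurableSpace E] [BorelSpace E] (μ : Measure E) [μ.IsAddHaarMeasure] {s : Set E}

theorem setIntegral_det_id_add_fderiv_of_norm_le {v : E → E} {K : ℝ≥0} (hs : IsClosed s)
    (hsc : Convex ℝ s) (hv : Differentiable ℝ v) (hK : K < 1)
    (hbound : ∀ x ∈ s, ‖fderiv ℝ v x‖₊ ≤ K) (h0 : ∀ x ∈ frontier s, v x = 0) :
    ∫ x in s, (ContinuousLinearMap.id ℝ E + fderiv ℝ v x).det ∂μ = μ.real s := by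
  have := FiniteDimensional.complete ℝ E
  have hlip : LipschitzOnWith K v s :=
    hsc.lipschitzOnWith_of_nnnorm_fderiv_le (fun x _ ↦ hv x) hbound
  have hbij := bijOn_id_add_of_lipschitzOnWith hlip hK hs h0
  have hchange := integral_image_eq_integral_abs_det_fderiv_smul μ hs.measurableSet
    (fun x _ ↦ ((hasFDerivAt_id x).add (hv x).hasFDerivAt).hasFDerivWithinAt) hbij.injOn
    (fun _ ↦ (1 : ℝ))
  have himage : (id + v) '' s = s := hbij.image_eq
  rw [himage] at hchange
  simp only [integral_const, smul_eq_mul, mul_one, measureReal_restrict_apply_univ] at hchange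
  rw [hchange]
  refine setIntegral_congr_fun hs.measurableSet fun x hx ↦ (abs_of_pos (det_id_add_pos ?_)).symm
  exact (hbound x hx).trans_lt hK

/-- Along the homotopy `x + t • (g x - x)` the Jacobian integral is polynomial in `t`, and it is
constant for small `t`. -/
theorem setIntegral_det_fderiv_eq_measureReal {g : E → E} (hs : IsCompact s) (hsc : Convex ℝ s)
    (hg : ContDiff ℝ 1 g) (hfix : ∀ x ∈ frontier s, g x = x) :
    ∫ x in s, (fderiv ℝ g x).det ∂μ = μ.real s := by
  set v : E → E := fun x ↦ g x - x
  have hv : ContDiff ℝ 1 v := hg.sub contDiff_id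
  have hv' : Continuous (fderiv ℝ v) := hv.continuous_fderiv one_ne_zero
  have hgv : ∀ x, fderiv ℝ g x = ContinuousLinearMap.id ℝ E + fderiv ℝ v x := fun x ↦ by
    rw [fderiv_fun_sub (hg.differentiable one_ne_zero x) differentiableAt_fun_id, fderiv_fun_id,
      add_sub_cancel]
  obtain ⟨L, hL⟩ := hs.exists_bound_of_continuousOn hv'.continuousOn
  let small : Set ℝ := {t | ‖t‖₊ * L.toNNReal < 1}
  have hinfinite : small.Infinite := infinite_of_mem_nhds 0 <|
    (show Continuous fun t : ℝ ↦ ‖t‖₊ * L.toNNReal by fun_prop).continuousAt.eventually_lt_const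
      (by simp)
  have hsmall : ∀ t ∈ small,
      ∫ x in s, (ContinuousLinearMap.id ℝ E + t • fderiv ℝ v x).det ∂μ = μ.real s := by
    intro t ht
    have hfderiv : ∀ x, fderiv ℝ (t • v) x = t • fderiv ℝ v x := fun x ↦
      fderiv_const_smul (hv.differentiable one_ne_zero x) t
    simp_rw [← hfderiv]
    refine setIntegral_det_id_add_fderiv_of_norm_le μ hs.isClosed hsc
      ((hv.differentiable one_ne_zero).const_smul t) ht (fun x hx ↦ ?_) fun x hx ↦ ?_
    · rw [hfderiv, nnnorm_smul]
      gcongr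
      exact NNReal.coe_le_coe.1 ((hL x hx).trans (Real.le_coe_toNNReal L))
    · simp [v, hfix x hx]
  obtain ⟨T, w, hT, hsum, hdet⟩ := exists_weights_det_id_add_eq_sum E hinfinite
  have hint (t : ℝ) :
      IntegrableOn (fun x ↦ (ContinuousLinearMap.id ℝ E + t • fderiv ℝ v x).det) s μ :=
    (ContinuousLinearMap.continuous_det.comp
      (continuous_const.add (hv'.const_smul t))).continuousOn.integrableOn_compact hs
  rw [show (fun x ↦ (fderiv ℝ g x).det) = fun x ↦ ∑ t ∈ T, w t *
      (ContinuousLinearMap.id ℝ E + t • fderiv ℝ v x).det from funext fun x ↦ by rw [hgv, hdet],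
    integral_finsetSum _ fun t _ ↦ (hint t).const_mul _]
  simp_rw [integral_const_mul]
  rw [Finset.sum_congr rfl fun t ht ↦ by rw [hsmall t (hT ht)], ← Finset.sum_mul, hsum, one_mul]

end Jacobian

theorem det_fderiv_eq_zero_of_norm_eq {E : Type*} [NormedAddCommGroup E] [InnerProductSpace ℝ E]
    [FiniteDimensional ℝ E] {g : E → E} {R : ℝ} (hR : R ≠ 0) (hg : Differentiable ℝ g)
    (hnorm : ∀ x, ‖g x‖ = R) (x : E) : (fderiv ℝ g x).det = 0 := by
  by_contra hdet
  have hsurj : Function.Surjective (fderiv ℝ g x) :=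
    LinearMap.range_eq_top.1 <| (LinearMap.isUnit_iff_range_eq_top _).1 <|
      (LinearMap.isUnit_iff_isUnit_det _).2 (isUnit_iff_ne_zero.2 hdet)
  obtain ⟨u, hu⟩ := hsurj (g x)
  have hsq : (fun y ↦ inner ℝ (g y) (g y)) = fun _ ↦ R ^ 2 := by
    funext y
    rw [real_inner_self_eq_norm_sq, hnorm]
  have hzero := (hg x).hasFDerivAt.inner ℝ (hg x).hasFDerivAt
  rw [hsq] at hzero
  have hgx := congrArg (fun T ↦ T u) (hzero.unique (hasFDerivAt_const _ _))
  have hgx' : ‖g x‖ = 0 := by simpa [hu] using hgx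
  exact hR (hnorm x ▸ hgx')

/-! ### Brouwer's theorems -/

section Brouwer

variable {E : Type*} [NormedAddCommGroup E] [InnerProductSpace ℝ E] [FiniteDimensional ℝ E]

theorem exists_norm_ne_of_eqOn_sphere {g : E → E} {R : ℝ} (hR : 0 < R) (hg : ContDiff ℝ 1 g)
    (hfix : EqOn g id (sphere 0 R)) : ∃ x, ‖g x‖ ≠ R := by
  by_contra! hnorm
  borelize E
  have hint := setIntegral_det_fderiv_eq_measureReal volume (isCompact_closedBall (0 : E) R)
    (convex_closedBall 0 R) hg fun x hx ↦ hfix (frontier_closedBall_subset_sphere hx)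
  simp only [det_fderiv_eq_zero_of_norm_eq hR.ne' (hg.differentiable one_ne_zero) hnorm,
    integral_zero] at hint
  exact (ENNReal.toReal_pos (measure_closedBall_pos volume (0 : E) hR).ne'
    measure_closedBall_lt_top.ne).ne hint

theorem exists_eq_zero_of_eq_self_of_lt_norm {F : E → E} {r : ℝ} (hF : Continuous F)
    (hid : ∀ x, r < ‖x‖ → F x = x) : ∃ x, F x = 0 := by
  by_contra! hne
  set R := |r| + 1
  have hR : 0 < R := by positivity
  have hrR : r < R := (le_abs_self r).trans_lt (lt_add_one _)
  obtain ⟨G, hG, hdist, hGF, -⟩ := hF.exists_contDiff_approx_and_eqOn 1 hF.norm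
    (fun x ↦ norm_pos_iff.2 (hne x)) (isClosed_le continuous_const continuous_norm)
    ((isOpen_lt continuous_const continuous_norm).mem_nhdsSet.2
      fun x (hx : R ≤ ‖x‖) ↦ show r < ‖x‖ from hrR.trans_le hx)
    (contDiffOn_id.congr fun x hx ↦ hid x hx)
  have hG0 : ∀ x, G x ≠ 0 := fun x h0 ↦ by
    simpa [h0] using hdist x
  obtain ⟨x, hx⟩ := exists_norm_ne_of_eqOn_sphere (g := fun x ↦ (R / ‖G x‖) • G x) hR
    ((contDiff_const.div (hG.norm ℝ hG0) fun x ↦ norm_ne_zero_iff.2 (hG0 x)).smul hG)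
    fun x hx ↦ by
      have hxR : ‖x‖ = R := mem_sphere_zero_iff_norm.1 hx
      have hGx : G x = x := by rw [hGF hxR.ge, hid x (hxR ▸ hrR)]
      simp only [hGx, hxR, id, div_self hR.ne', one_smul]
  refine hx ?_
  rw [norm_smul, norm_div, norm_norm, div_mul_cancel₀ _ (norm_ne_zero_iff.2 (hG0 x)),
    Real.norm_of_nonneg hR.le]

theorem exists_fixedPoint_of_mapsTo_closedBall {h : E → E} (hc : ContinuousOn h (closedBall 0 1))
    (hm : MapsTo h (closedBall 0 1) (closedBall 0 1)) : ∃ x ∈ closedBall (0 : E) 1, h x = x := by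
  let p : E → E := fun x ↦ (max 1 ‖x‖)⁻¹ • x
  have hpc : Continuous p :=
    ((continuous_const.max continuous_norm).inv₀ fun x ↦ by positivity).smul continuous_id
  have hpm : ∀ x, p x ∈ closedBall 0 1 := fun x ↦ by
    rw [mem_closedBall_zero_iff, norm_smul, norm_inv, Real.norm_of_nonneg (by positivity),
      inv_mul_le_one₀ (by positivity)]
    exact le_max_right 1 ‖x‖
  have hpid : ∀ x ∈ closedBall (0 : E) 1, p x = x := fun x hx ↦ by
    simp only [p, max_eq_left (mem_closedBall_zero_iff.1 hx), inv_one, one_smul]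
  have hhp : Continuous (h ∘ p) := hc.comp_continuous hpc hpm
  let χ : E → ℝ := fun x ↦ max 0 (min 1 (2 - ‖x‖))
  have hχc : Continuous χ := by fun_prop
  have hχ0 : ∀ x, 2 < ‖x‖ → χ x = 0 := fun x hx ↦
    max_eq_left ((min_le_right _ _).trans (by linarith))
  obtain ⟨x, hx⟩ := exists_eq_zero_of_eq_self_of_lt_norm (F := fun x ↦ x - χ x • h (p x))
    (continuous_id.sub (hχc.smul hhp)) fun x hx ↦ by rw [hχ0 x hx, zero_smul, sub_zero]
  have hx' : x = χ x • h (p x) := sub_eq_zero.1 hx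
  have hxb : ‖x‖ ≤ 1 := by
    rw [hx', norm_smul, Real.norm_of_nonneg (le_max_left _ _)]
    exact mul_le_one₀ (max_le zero_le_one (min_le_left _ _)) (norm_nonneg _)
      (mem_closedBall_zero_iff.1 (hm (hpm x)))
  have hxp := hpid x (mem_closedBall_zero_iff.2 hxb)
  have hχ : χ x = 1 := by
    simp only [χ]
    rw [min_eq_left (by linarith), max_eq_right zero_le_one]
  rw [hxp, hχ, one_smul] at hx'
  exact ⟨x, mem_closedBall_zero_iff.2 hxb, hx'.symm⟩

end Brouwer

section InvarianceOfDomain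

variable {E : Type*} [NormedAddCommGroup E] [NormedSpace ℝ E]

theorem exists_continuous_dist_lt_forall_mem_ne_zero [FiniteDimensional ℝ E] [MeasurableSpace E]
    [BorelSpace E] (μ : Measure E) [μ.IsAddHaarMeasure] {G : E → E} (hG : Continuous G) {s : Set E}
    (hs : μ s = 0) {η : ℝ} (hη : 0 < η) :
    ∃ P : E → E, Continuous P ∧ (∀ x, dist (P x) (G x) < η) ∧ ∀ x ∈ s, P x ≠ 0 := by
  obtain ⟨P, hP, hPG, -⟩ := hG.exists_contDiff_approx 1 (ε := fun _ ↦ η / 2) continuous_const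
    fun _ ↦ half_pos hη
  have hnull : μ (P '' s) = 0 := addHaar_image_eq_zero_of_differentiableOn_of_addHaar_eq_zero μ
    (hP.differentiable one_ne_zero).differentiableOn hs
  obtain ⟨a, ha, haP⟩ : ∃ a ∈ ball (0 : E) (η / 2), a ∉ P '' s := not_subset.1 fun hsub ↦
    (measure_ball_pos μ (0 : E) (half_pos hη)).ne' (measure_mono_null hsub hnull)
  refine ⟨fun x ↦ P x - a, hP.continuous.sub continuous_const, fun x ↦ ?_, fun x hx h0 ↦
    haP ⟨x, hx, sub_eq_zero.1 h0⟩⟩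
  calc dist (P x - a) (G x) ≤ dist (P x - a) (P x) + dist (P x) (G x) := dist_triangle _ _ _
    _ < η / 2 + η / 2 := by
      gcongr
      · rwa [dist_self_sub_left, ← mem_ball_zero_iff]
      · exact hPG x
    _ = η := add_halves η

theorem exists_continuousOn_compl_singleton_push (c : E) {ε : ℝ} (hε : 0 < ε) :
    ∃ ρ : E → E, ContinuousOn ρ {c}ᶜ ∧ (∀ y, ε ≤ dist y c → ρ y = y) ∧
      ∀ y ≠ c, dist y c ≤ ε → ρ y ∈ sphere c ε := by
  have hne : ∀ y ∈ ({c}ᶜ : Set E), dist y c ≠ 0 := fun y hy ↦ dist_ne_zero.2 hy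
  refine ⟨fun y ↦ c + max (ε / dist y c) 1 • (y - c), ?_, fun y hy ↦ ?_, fun y hyc hy ↦ ?_⟩
  · exact continuousOn_const.add (((continuousOn_const.div (by fun_prop) hne).sup
      continuousOn_const).smul (by fun_prop))
  · beta_reduce
    rw [max_eq_right ((div_le_one (hε.trans_le hy)).2 hy), one_smul, add_sub_cancel]
  · have hpos : 0 < dist y c := dist_pos.2 hyc
    beta_reduce
    rw [max_eq_left ((one_le_div hpos).2 hy), mem_sphere_iff_norm, add_sub_cancel_left, norm_smul,
      Real.norm_of_nonneg (by positivity), ← dist_eq_norm, div_mul_cancel₀ _ hpos.ne']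

theorem exists_continuousOn_dist_le_forall_mem_ne_zero [FiniteDimensional ℝ E] {G : E → E}
    (hG : Continuous G) {s : Set E} (hs : IsCompact s) {y₀ : E} (hG0 : G y₀ = 0)
    (hGs : ∀ y ∈ s, y ≠ y₀ → G y ≠ 0) (hy₀ : s ∉ 𝓝 y₀) {η : ℝ} (hη : 0 < η) :
    ∃ F : E → E, ContinuousOn F s ∧ ∀ y ∈ s, dist (F y) (G y) ≤ η ∧ F y ≠ 0 := by
  borelize E
  obtain ⟨r, hr, hGr⟩ : ∃ r > 0, ∀ y, dist y y₀ < r → dist (G y) 0 < η / 4 := by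
    simpa only [hG0] using Metric.continuous_iff.1 hG y₀ (η / 4) (by positivity)
  obtain ⟨ε, hε, rfl⟩ : ∃ ε > 0, r = 2 * ε := ⟨r / 2, half_pos hr, by ring⟩
  obtain ⟨c, hc, hcs⟩ : ∃ c ∈ ball y₀ ε, c ∉ s := not_subset.1 fun hsub ↦
    hy₀ (mem_of_superset (ball_mem_nhds y₀ hε) hsub)
  have hnear : ∀ y, dist y c ≤ ε → dist (G y) 0 < η / 4 := fun y hy ↦ hGr y <| by
    linarith [dist_triangle y c y₀, mem_ball.1 hc]
  have hne : ∀ y ∈ s, y ≠ c := fun y hy h ↦ hcs (h ▸ hy)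
  have hfar : IsCompact (s ∩ {y | ε ≤ dist y c}) :=
    hs.inter_right (isClosed_le continuous_const (by fun_prop))
  obtain ⟨δ, hδ, hGδ⟩ := hfar.exists_forall_le' (f := fun y ↦ dist (G y) 0) (a := 0)
    (by fun_prop) fun y ⟨hys, hyc⟩ ↦ dist_pos.2 <| hGs y hys <| by
      rintro rfl
      exact (mem_ball'.1 hc).not_ge hyc
  obtain ⟨P, hPc, hPG, hP0⟩ := exists_continuous_dist_lt_forall_mem_ne_zero Measure.addHaar hG
    (Measure.addHaar_sphere_of_ne_zero Measure.addHaar c hε.ne')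
    (lt_min hδ (by positivity : 0 < η / 4))
  obtain ⟨ρ, hρc, hρfar, hρnear⟩ := exists_continuousOn_compl_singleton_push c hε
  have hPδ : ∀ y, dist (P y) (G y) < δ := fun y ↦ (hPG y).trans_le (min_le_left _ _)
  have hPη : ∀ y, dist (P y) (G y) < η / 4 := fun y ↦ (hPG y).trans_le (min_le_right _ _)
  refine ⟨P ∘ ρ, hPc.comp_continuousOn (hρc.mono hne), fun y hy ↦ ?_⟩
  simp only [Function.comp_apply]
  rcases le_total ε (dist y c) with hyc | hyc
  · rw [hρfar y hyc]
    refine ⟨by linarith [hPη y], fun h0 ↦ (hGδ y ⟨hy, hyc⟩).not_gt ?_⟩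
    simpa only [h0, dist_comm] using hPδ y
  · have hρy := hρnear y (hne y hy) hyc
    refine ⟨?_, hP0 _ hρy⟩
    linarith [hPη (ρ y), hnear y hyc, hnear _ hρy.le, dist_triangle (P (ρ y)) (G (ρ y)) (G y),
      dist_triangle_right (G (ρ y)) (G y) 0]

theorem image_closedBall_mem_nhds_of_injOn {F : Type*} [NormedAddCommGroup F]
    [InnerProductSpace ℝ F] [FiniteDimensional ℝ F] {f : F → F}
    (hc : ContinuousOn f (closedBall 0 1)) (hi : InjOn f (closedBall 0 1)) :
    f '' closedBall 0 1 ∈ 𝓝 (f 0) := by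
  by_contra hnhds
  have hB : IsCompact (closedBall (0 : F) 1) := isCompact_closedBall 0 1
  have : CompactSpace (closedBall (0 : F) 1) := isCompact_iff_compactSpace.1 hB
  obtain ⟨G, hG⟩ := ContinuousMap.exists_extension
    (hc.domRestrict.isClosedEmbedding hi.injective) ⟨Subtype.val, continuous_subtype_val⟩
  have hGf : ∀ x ∈ closedBall (0 : F) 1, G (f x) = x := fun x hx ↦ congrArg (· ⟨x, hx⟩) hG
  have hzero : (0 : F) ∈ closedBall 0 1 := mem_closedBall_self zero_le_one
  obtain ⟨P, hPc, hPG⟩ := exists_continuousOn_dist_le_forall_mem_ne_zero G.continuous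
    (hB.image_of_continuousOn hc) (hGf 0 hzero) (by
      rintro _ ⟨x, hx, rfl⟩ hne h0
      exact hne (by rw [← hGf x hx, h0]))
    hnhds one_pos
  obtain ⟨x, hx, hfix⟩ := exists_fixedPoint_of_mapsTo_closedBall (h := fun x ↦ x - P (f x))
    (continuousOn_id.sub (hPc.comp hc (mapsTo_image f _))) fun x hx ↦ by
      rw [mem_closedBall_zero_iff, ← dist_eq_norm, dist_comm]
      simpa only [hGf x hx] using (hPG (f x) (mem_image_of_mem f hx)).1
  exact (hPG _ (mem_image_of_mem f hx)).2 (sub_eq_self.1 hfix)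

theorem isOpen_image_of_continuousOn_of_injOn [FiniteDimensional ℝ E] {f : E → E} {s : Set E}
    (hs : IsOpen s) (hc : ContinuousOn f s) (hi : InjOn f s) : IsOpen (f '' s) := by
  rw [isOpen_iff_mem_nhds]
  rintro _ ⟨x, hx, rfl⟩
  let L : E ≃L[ℝ] EuclideanSpace ℝ (Fin (Module.finrank ℝ E)) := toEuclidean
  obtain ⟨r, hr, hrs⟩ := Metric.nhds_basis_closedBall.mem_iff.1
    ((hs.preimage L.symm.continuous).mem_nhds (show L x ∈ L.symm ⁻¹' s by simpa))
  let a : EuclideanSpace ℝ (Fin (Module.finrank ℝ E)) → E := fun z ↦ L.symm (L x + r • z)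
  have ha : MapsTo a (closedBall 0 1) s := fun z hz ↦ hrs <| by
    rw [mem_closedBall_iff_norm, add_sub_cancel_left, norm_smul, Real.norm_of_nonneg hr.le]
    exact mul_le_of_le_one_right hr.le (mem_closedBall_zero_iff.1 hz)
  have ha0 : a 0 = x := by simp [a]
  have hac : Continuous a := by fun_prop
  have hai : Function.Injective a := fun z w h ↦ by
    simpa [a, hr.ne'] using h
  have himage := image_closedBall_mem_nhds_of_injOn (f := L ∘ f ∘ a)
    (L.continuous.comp_continuousOn (hc.comp hac.continuousOn ha))
    (L.injective.comp_injOn (hi.comp hai.injOn ha))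
  rw [Function.comp_apply, Function.comp_apply, ha0, ← L.map_nhds_eq, mem_map] at himage
  refine mem_of_superset himage ?_
  rintro y ⟨z, hz, hzy⟩
  exact ⟨a z, ha hz, L.injective hzy⟩

theorem isHomeomorph_of_isSimilarityWith [FiniteDimensional ℝ E] {f : E → E} {r : ℝ}
    (hf : IsSimilarityWith r f) : IsHomeomorph f := by
  have := FiniteDimensional.complete ℝ E
  have hlip : LipschitzWith r.toNNReal f := LipschitzWith.of_dist_le_mul fun x y ↦ by
    rw [hf.2, Real.coe_toNNReal r hf.1.le]
  have hanti : AntilipschitzWith r⁻¹.toNNReal f := AntilipschitzWith.of_le_mul_dist fun x y ↦ by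
    rw [hf.2, Real.coe_toNNReal _ (inv_nonneg.2 hf.1.le), inv_mul_cancel_left₀ hf.1.ne']
  have hembed := hanti.isClosedEmbedding hlip.uniformContinuous
  have hopen : IsOpen (range f) := by
    rw [← image_univ]
    exact isOpen_image_of_continuousOn_of_injOn isOpen_univ hlip.continuous.continuousOn
      hanti.injective.injOn
  exact isHomeomorph_iff_isEmbedding_surjective.2 ⟨hembed.isEmbedding, range_eq_univ.1
    (IsClopen.eq_univ ⟨hembed.isClosed_range, hopen⟩ (range_nonempty f))⟩

end InvarianceOfDomain

/-! ### Separated systems and pasting problems -/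

section SeparatedSystem

variable {X ι : Type*}

/-- The Hutchinson operator `A ↦ ⋃ᵢ fᵢ(A)` of an iterated function system. -/
def hutchinson (f : ι → X → X) (A : Set X) : Set X := ⋃ i, f i '' A

theorem image_subset_hutchinson (f : ι → X → X) (A : Set X) (i : ι) : f i '' A ⊆ hutchinson f A :=
  subset_iUnion (fun i ↦ f i '' A) i

theorem hutchinson_mono (f : ι → X → X) : Monotone (hutchinson f) :=
  fun _ _ h ↦ iUnion_mono fun _ ↦ image_mono h

theorem closure_hutchinson [TopologicalSpace X] [Finite ι] {f : ι → X → X}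
    (hf : ∀ i, IsHomeomorph (f i)) (A : Set X) :
    closure (hutchinson f A) = hutchinson f (closure A) := by
  simp only [hutchinson, closure_iUnion_of_finite, (hf _).image_closure]

/-- A system of homeomorphisms satisfying the strong separation condition on a bounded open set. -/
structure SeparatedSystem [MetricSpace X] (f : ι → X → X) (Q : Set X) : Prop where
  isHomeomorph : ∀ i, IsHomeomorph (f i)
  isOpen : IsOpen Q
  isBounded : Bornology.IsBounded Q
  strongSeparation : StrongSeparation f Q

namespace SeparatedSystem

variable [MetricSpace X] {f : ι → X → X} {Q : Set X} {i j : ι} {x y : X}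

theorem apply_mem (h : SeparatedSystem f Q) (i : ι) (hx : x ∈ closure Q) : f i x ∈ Q :=
  h.strongSeparation.1 i (mem_image_of_mem _ hx)

theorem eq_of_apply_eq (h : SeparatedSystem f Q) (hx : x ∈ closure Q) (hy : y ∈ closure Q)
    (hxy : f i x = f j y) : i = j ∧ x = y := by
  obtain rfl : i = j := by_contra fun hij ↦
    disjoint_left.1 (h.strongSeparation.2 i j hij) (mem_image_of_mem _ hx) ⟨y, hy, hxy.symm⟩
  exact ⟨rfl, (h.isHomeomorph i).injective hxy⟩

theorem isOpen_hutchinson (h : SeparatedSystem f Q) : IsOpen (hutchinson f Q) :=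
  isOpen_iUnion fun i ↦ (h.isHomeomorph i).isOpenMap Q h.isOpen

theorem hutchinson_subset (h : SeparatedSystem f Q) : hutchinson f Q ⊆ Q :=
  iUnion_subset fun i ↦ (image_mono subset_closure).trans (h.strongSeparation.1 i)

theorem notMem_of_mem_frontier (h : SeparatedSystem f Q) (hx : x ∈ frontier Q) : x ∉ Q :=
  (h.isOpen.frontier_eq ▸ hx : x ∈ closure Q \ Q).2

theorem apply_mem_hutchinson_iff (h : SeparatedSystem f Q) (hx : x ∈ closure Q) :
    f i x ∈ hutchinson f Q ↔ x ∈ Q := by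
  refine ⟨fun hU ↦ ?_, fun hQ ↦ image_subset_hutchinson f Q i (mem_image_of_mem _ hQ)⟩
  obtain ⟨j, y, hy, hyx⟩ := mem_iUnion.1 hU
  exact (h.eq_of_apply_eq (subset_closure hy) hx hyx).2 ▸ hy

theorem apply_notMem_hutchinson (h : SeparatedSystem f Q) (hx : x ∈ frontier Q) :
    f i x ∉ hutchinson f Q :=
  mt (h.apply_mem_hutchinson_iff (frontier_subset_closure hx)).1 (h.notMem_of_mem_frontier hx)

theorem frontier_hutchinson_subset [Finite ι] (h : SeparatedSystem f Q) :
    frontier (hutchinson f Q) ⊆ hutchinson f (frontier Q) := by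
  rw [h.isOpen_hutchinson.frontier_eq, closure_hutchinson h.isHomeomorph]
  rintro z ⟨hz, hzU⟩
  obtain ⟨i, x, hx, rfl⟩ := mem_iUnion.1 hz
  refine image_subset_hutchinson f _ i (mem_image_of_mem _ ?_)
  rw [h.isOpen.frontier_eq]
  exact ⟨hx, fun hxQ ↦ hzU ((h.apply_mem_hutchinson_iff hx).2 hxQ)⟩

theorem hutchinson_eventuallyEq_image [Finite ι] (h : SeparatedSystem f Q) (hx : x ∈ closure Q) :
    hutchinson f Q =ᶠ[𝓝 (f i x)] f i '' Q := by
  have hne : ∀ j, ∀ᶠ z in 𝓝 (f i x), j ≠ i → z ∉ f j '' closure Q := fun j ↦ by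
    by_cases hji : j = i
    · exact Eventually.of_forall fun _ hne ↦ absurd hji hne
    · filter_upwards [((h.isHomeomorph j).isClosedMap _ isClosed_closure).isOpen_compl.mem_nhds
        fun ⟨y, hy, hyx⟩ ↦ hji (h.eq_of_apply_eq hy hx hyx).1] with z hz _ using hz
  filter_upwards [eventually_all.2 hne] with z hz
  refine propext ⟨fun hzU ↦ ?_, fun hzi ↦ image_subset_hutchinson f Q i hzi⟩
  obtain ⟨j, hzj⟩ := mem_iUnion.1 hzU
  obtain rfl : j = i := by_contra fun hji ↦ hz j hji (image_mono subset_closure hzj)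
  exact hzj

end SeparatedSystem

theorem eventually_indicator_eq_of_notMem_frontier [TopologicalSpace X] {M : Type*} [Zero M]
    (c : M) {A : Set X} {x : X} (hx : x ∉ frontier A) :
    ∀ᶠ y in 𝓝 x, A.indicator (fun _ ↦ c) y = A.indicator (fun _ ↦ c) x := by
  rw [← mem_compl_iff, compl_frontier_eq_union_interior] at hx
  rcases hx with hx | hx
  · filter_upwards [mem_interior_iff_mem_nhds.1 hx] with y hy
    rw [indicator_of_mem hy, indicator_of_mem (interior_subset hx)]
  · filter_upwards [mem_interior_iff_mem_nhds.1 hx] with y hy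
    rw [indicator_of_notMem hy, indicator_of_notMem (interior_subset hx)]

/-- The number of sets `A i` containing a point, minus the indicator of `V`, is locally constant:
on `frontier (A i)` the jumps of `A i` and of `V` cancel. -/
theorem iUnion_eq_and_pairwise_disjoint_of_frontier [TopologicalSpace X] [PreconnectedSpace X]
    [Finite ι] {A : ι → Set X} {V : Set X} (hV : frontier V ⊆ ⋃ i, frontier (A i))
    (hA : Pairwise (Disjoint on fun i ↦ frontier (A i)))
    (hAV : ∀ i, ∀ x ∈ frontier (A i), A i =ᶠ[𝓝 x] V) {x₀ : X} (hx₀ : ∀ i, x₀ ∉ A i)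
    (hx₀V : x₀ ∉ V) : ⋃ i, A i = V ∧ Pairwise (Disjoint on A) := by
  classical
  have := Fintype.ofFinite ι
  let N : X → ℤ := fun x ↦ ∑ i, (A i).indicator (fun _ ↦ 1) x - V.indicator (fun _ ↦ 1) x
  have hN : IsLocallyConstant N := by
    refine (IsLocallyConstant.iff_eventually_eq N).2 fun x ↦ ?_
    by_cases hx : ∃ i, x ∈ frontier (A i)
    · obtain ⟨i, hi⟩ := hx
      have hsplit : ∀ y, (y ∈ A i ↔ y ∈ V) →
          N y = ∑ j ∈ Finset.univ.erase i, (A j).indicator (fun _ ↦ 1) y := fun y hy ↦ by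
        simp only [N, ← Finset.add_sum_erase _ _ (Finset.mem_univ i), indicator_apply, hy]
        ring
      have hother : ∀ j ≠ i, x ∉ frontier (A j) := fun j hji hj ↦
        disjoint_left.1 (hA hji) hj hi
      filter_upwards [hAV i x hi, (eventually_all_finset (Finset.univ.erase i)).2 fun j hj ↦
        eventually_indicator_eq_of_notMem_frontier (1 : ℤ) (hother j (Finset.ne_of_mem_erase hj))]
        with y hyV hy
      rw [hsplit y hyV.to_iff, hsplit x (hAV i x hi).self_of_nhds.to_iff]
      exact Finset.sum_congr rfl hy
    · filter_upwards [
        eventually_indicator_eq_of_notMem_frontier (1 : ℤ) fun hxV ↦ hx (mem_iUnion.1 (hV hxV)),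
        eventually_all.2 fun i ↦
          eventually_indicator_eq_of_notMem_frontier (1 : ℤ) fun hi ↦ hx ⟨i, hi⟩]
        with y hyV hy
      simp only [N, hyV, hy]
  have hcard : ∀ x, (Finset.card {i | x ∈ A i} : ℤ) = V.indicator (fun _ ↦ 1) x := fun x ↦ by
    have := hN.apply_eq_of_preconnectedSpace x x₀
    simpa [N, hx₀, hx₀V, sub_eq_zero, indicator_apply] using this
  refine ⟨ext fun x ↦ ?_, fun i j hij ↦ disjoint_left.2 fun x hi hj ↦ hij ?_⟩
  · have hpos : x ∈ ⋃ i, A i ↔ (0 : ℤ) < Finset.card {i | x ∈ A i} := by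
      simp [Finset.card_pos, Finset.filter_nonempty_iff]
    rw [hpos, hcard]
    by_cases hx : x ∈ V <;> simp [hx]
  · have hle : (Finset.card {i | x ∈ A i} : ℤ) ≤ 1 := by
      rw [hcard]
      exact indicator_le_self' (fun _ _ ↦ zero_le_one) x
    exact Finset.card_le_one.1 (mod_cast hle) i (by simpa using hi) j (by simpa using hj)

end SeparatedSystem

section Pasting

variable {E ι : Type*}

theorem map_nhdsWithin_of_subset_source {X Y : Type*} [TopologicalSpace X] [TopologicalSpace Y]
    (e : PartialHomeomorph X Y) {s : Set X} (hs : s ⊆ e.source) {x : X} (hx : x ∈ s) :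
    map e (𝓝[s] x) = 𝓝[e '' s] e x :=
  (e.leftInvOn.mono hs).map_nhdsWithin_eq (e.left_inv (hs hx))
    ((e.continuousOn_symm.mono ((image_mono hs).trans e.image_source_subset)) _
      (mem_image_of_mem e hx))
    ((e.continuousOn.mono hs) x hx)

theorem frontier_subset_image_frontier [NormedAddCommGroup E] [NormedSpace ℝ E]
    [FiniteDimensional ℝ E] {f : E → E} {A B : Set E} (hc : ContinuousOn f Aᶜ) (hi : InjOn f Aᶜ)
    (hB : IsOpen B) (hAB : f '' Aᶜ = Bᶜ) : frontier B ⊆ f '' frontier A := by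
  intro z hz
  have hzB : z ∈ Bᶜ := fun h ↦ (hB.inter_frontier_eq ▸ ⟨h, hz⟩ : z ∈ (∅ : Set E))
  obtain ⟨x, hx, rfl⟩ := hAB ▸ hzB
  refine mem_image_of_mem f ?_
  rw [frontier_eq_closure_inter_closure]
  refine ⟨?_, subset_closure hx⟩
  by_contra hxA
  rw [← mem_compl_iff, ← interior_compl] at hxA
  have hopen : IsOpen (f '' interior Aᶜ) := isOpen_image_of_continuousOn_of_injOn isOpen_interior
    (hc.mono interior_subset) (hi.mono interior_subset)
  rw [← frontier_compl] at hz
  exact hz.2 (interior_maximal ((image_mono interior_subset).trans hAB.subset) hopen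
    (mem_image_of_mem f hxA))

theorem image_frontier_eq_frontier [NormedAddCommGroup E] [NormedSpace ℝ E]
    [FiniteDimensional ℝ E] {e : PartialHomeomorph E E} {A B : Set E} (hA : IsOpen A)
    (hB : IsOpen B) (hAe : Aᶜ ⊆ e.source) (hAB : e '' Aᶜ = Bᶜ) :
    e '' frontier A = frontier B := by
  have hBe : Bᶜ ⊆ e.target := hAB ▸ (image_mono hAe).trans e.image_source_subset
  have hBA : e.symm '' Bᶜ = Aᶜ := by rw [← hAB, (e.leftInvOn.mono hAe).image_image]
  refine Subset.antisymm ?_ (frontier_subset_image_frontier (e.continuousOn.mono hAe)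
    (e.injOn.mono hAe) hB hAB)
  have h : frontier A ⊆ e.symm '' frontier B := frontier_subset_image_frontier
    (e.continuousOn_symm.mono hBe) (e.symm.injOn.mono hBe) hA hBA
  refine (image_mono h).trans_eq ?_
  have hfr : frontier B ⊆ e.target := fun z hz ↦ hBe fun h ↦
    (hB.inter_frontier_eq ▸ ⟨h, hz⟩ : z ∈ (∅ : Set E))
  exact (e.rightInvOn.mono hfr).image_image

/-- A pasting problem: `e` maps the complement of the first generation `⋃ᵢ fᵢ(Q)` of a separated
system homeomorphically onto the complement of the first generation `⋃ᵢ gᵢ(S)` of another system of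
homeomorphisms, and conjugates `f i` to `g i` near the frontier of `Q`, on the outer side. -/
structure PastingProblem [MetricSpace E] (f g : ι → E → E) (Q S : Set E)
    (e : PartialHomeomorph E E) : Prop where
  separatedSystem : SeparatedSystem f Q
  isHomeomorph : ∀ i, IsHomeomorph (g i)
  isOpen : IsOpen S
  isBounded : Bornology.IsBounded S
  source_eq : e.source = (hutchinson f Q)ᶜ
  target_eq : e.target = (hutchinson g S)ᶜ
  eventually_comm : ∀ i, ∀ x ∈ frontier Q, ∀ᶠ y in 𝓝[Qᶜ] x, e (f i y) = g i (e y)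

/-- A pasting problem between two separated systems that is symmetric in them: `e` maps the
complement of `Q` onto that of `S` and conjugates `f i` to `g i` on the frontier of `Q`. -/
structure FrontierConjugacy [MetricSpace E] (f g : ι → E → E) (Q S : Set E)
    (e : PartialHomeomorph E E) : Prop where
  left : SeparatedSystem f Q
  right : SeparatedSystem g S
  source_eq : e.source = (hutchinson f Q)ᶜ
  target_eq : e.target = (hutchinson g S)ᶜ
  image_compl : e '' Qᶜ = Sᶜ
  image_frontier : e '' frontier Q = frontier S
  apply_comm : ∀ i, ∀ x ∈ frontier Q, e (f i x) = g i (e x)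

namespace PastingProblem

section Metric

variable [MetricSpace E] {f g : ι → E → E} {Q S : Set E} {e : PartialHomeomorph E E} {i : ι} {x : E}

theorem compl_subset_source (h : PastingProblem f g Q S e) : Qᶜ ⊆ e.source := by
  rw [h.source_eq]
  exact compl_subset_compl.2 h.separatedSystem.hutchinson_subset

theorem apply_mem_source (h : PastingProblem f g Q S e) (hx : x ∈ frontier Q) :
    f i x ∈ e.source := by
  rw [h.source_eq]
  exact h.separatedSystem.apply_notMem_hutchinson hx

theorem apply_comm (h : PastingProblem f g Q S e) (hx : x ∈ frontier Q) :
    e (f i x) = g i (e x) :=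
  (h.eventually_comm i x hx).self_of_nhdsWithin (h.separatedSystem.notMem_of_mem_frontier hx)

theorem apply_notMem_image_compl (h : PastingProblem f g Q S e) (hx : x ∈ frontier Q) :
    g i (e x) ∉ e '' Qᶜ := by
  rw [← h.apply_comm hx]
  rintro ⟨y, hy, hyx⟩
  exact hy (e.injOn (h.compl_subset_source hy) (h.apply_mem_source hx) hyx ▸
    h.separatedSystem.apply_mem i (frontier_subset_closure hx))

theorem isOpen_compl_image_compl (h : PastingProblem f g Q S e) : IsOpen (e '' Qᶜ)ᶜ := by
  have htarget : IsClosed e.target := by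
    rw [h.target_eq]
    exact (isOpen_iUnion fun i ↦ (h.isHomeomorph i).isOpenMap S h.isOpen).isClosed_compl
  rw [isOpen_compl_iff, e.image_eq_target_inter_inv_preimage h.compl_subset_source]
  exact e.continuousOn_symm.preimage_isClosed_of_isClosed htarget
    h.separatedSystem.isOpen.isClosed_compl

theorem isBounded_hutchinson [ProperSpace E] [Finite ι] (h : PastingProblem f g Q S e) :
    Bornology.IsBounded (hutchinson g S) :=
  Bornology.isBounded_iUnion.2 fun i ↦
    (h.isBounded.isCompact_closure.image (h.isHomeomorph i).continuous).isBounded.subset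
      (image_mono subset_closure)

theorem isBounded_compl_image_compl [ProperSpace E] [Finite ι] (h : PastingProblem f g Q S e) :
    Bornology.IsBounded (e '' Qᶜ)ᶜ := by
  have hcompact : IsCompact (closure Q ∩ e.source) := by
    rw [h.source_eq]
    exact h.separatedSystem.isBounded.isCompact_closure.inter_right
      h.separatedSystem.isOpen_hutchinson.isClosed_compl
  refine (h.isBounded_hutchinson.union (hcompact.image_of_continuousOn
    (e.continuousOn.mono inter_subset_right)).isBounded).subset fun z hz ↦ ?_
  by_cases hzV : z ∈ hutchinson g S
  · exact Or.inl hzV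
  · obtain ⟨x, hx, rfl⟩ := e.surjOn (h.target_eq ▸ hzV : z ∈ e.target)
    exact Or.inr ⟨x, ⟨subset_closure (by_contra fun hxQ ↦ hz ⟨x, hxQ, rfl⟩), hx⟩, rfl⟩

theorem hutchinson_eventuallyEq [Finite ι] (h : PastingProblem f g Q S e) (hx : x ∈ frontier Q) :
    hutchinson g S =ᶠ[𝓝 (g i (e x))] g i '' (e '' Qᶜ)ᶜ := by
  have hsep := h.separatedSystem
  have hxQ : x ∈ Qᶜ := hsep.notMem_of_mem_frontier hx
  have hright : 𝓝[e.target] g i (e x) = 𝓝[(g i '' (e '' Qᶜ)ᶜ)ᶜ] g i (e x) := calc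
    𝓝[e.target] g i (e x) = 𝓝[e '' e.source] e (f i x) := by
      rw [e.image_source_eq_target, h.apply_comm hx]
    _ = map e (𝓝[e.source] f i x) :=
      (map_nhdsWithin_of_subset_source e Subset.rfl (h.apply_mem_source hx)).symm
    _ = map e (𝓝[f i '' Qᶜ] f i x) := by
      rw [h.source_eq, image_compl_eq (hsep.isHomeomorph i).bijective,
        nhdsWithin_eq_iff_eventuallyEq.2
          (hsep.hutchinson_eventuallyEq_image (frontier_subset_closure hx)).compl]
    _ = map (g i ∘ e) (𝓝[Qᶜ] x) := by
      rw [← (hsep.isHomeomorph i).isEmbedding.map_nhdsWithin_eq, map_map]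
      exact map_congr (h.eventually_comm i x hx)
    _ = 𝓝[g i '' (e '' Qᶜ)] g i (e x) := by
      rw [← map_map, map_nhdsWithin_of_subset_source e h.compl_subset_source hxQ,
        (h.isHomeomorph i).isEmbedding.map_nhdsWithin_eq]
    _ = 𝓝[(g i '' (e '' Qᶜ)ᶜ)ᶜ] g i (e x) := by
      rw [← image_compl_eq (h.isHomeomorph i).bijective, compl_compl]
  rw [h.target_eq, nhdsWithin_eq_iff_eventuallyEq] at hright
  simpa only [compl_compl] using hright.compl

end Metric

variable [NormedAddCommGroup E] [NormedSpace ℝ E] [FiniteDimensional ℝ E]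
  {f g : ι → E → E} {Q S : Set E} {e : PartialHomeomorph E E} {i : ι} {x : E}

theorem image_frontier (h : PastingProblem f g Q S e) :
    e '' frontier Q = frontier (e '' Qᶜ)ᶜ :=
  image_frontier_eq_frontier h.separatedSystem.isOpen h.isOpen_compl_image_compl
    h.compl_subset_source (compl_compl _).symm

theorem frontier_image (h : PastingProblem f g Q S e) :
    frontier (g i '' (e '' Qᶜ)ᶜ) = e '' (f i '' frontier Q) := by
  rw [← (h.isHomeomorph i).image_frontier, ← h.image_frontier, image_image, image_image]
  exact image_congr fun x hx ↦ (h.apply_comm hx).symm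

theorem pairwise_disjoint_frontier_image (h : PastingProblem f g Q S e) :
    Pairwise (Disjoint on fun i ↦ frontier (g i '' (e '' Qᶜ)ᶜ)) := by
  intro i j hij
  simp only [h.frontier_image]
  rw [Function.onFun, disjoint_left]
  rintro _ ⟨_, ⟨x, hx, rfl⟩, rfl⟩ ⟨_, ⟨y, hy, rfl⟩, hyx⟩
  exact hij (h.separatedSystem.eq_of_apply_eq (frontier_subset_closure hx)
    (frontier_subset_closure hy)
    (e.injOn (h.apply_mem_source hx) (h.apply_mem_source hy) hyx.symm)).1

theorem iUnion_image_and_pairwise_disjoint [Nontrivial E] [Finite ι]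
    (h : PastingProblem f g Q S e) :
    ⋃ i, g i '' (e '' Qᶜ)ᶜ = hutchinson g S ∧
      Pairwise (Disjoint on fun i ↦ g i '' (e '' Qᶜ)ᶜ) := by
  have := FiniteDimensional.proper ℝ E
  have hsep := h.separatedSystem
  have hbounded : Bornology.IsBounded (hutchinson g (e '' Qᶜ)ᶜ ∪ hutchinson g S) :=
    (Bornology.isBounded_iUnion.2 fun i ↦
      (h.isBounded_compl_image_compl.isCompact_closure.image
        (h.isHomeomorph i).continuous).isBounded.subset (image_mono subset_closure)).union
      h.isBounded_hutchinson
  obtain ⟨x₀, hx₀⟩ : ∃ x₀, x₀ ∉ hutchinson g (e '' Qᶜ)ᶜ ∪ hutchinson g S :=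
    (ne_univ_iff_exists_notMem _).1 fun huniv ↦
      NormedSpace.unbounded_univ ℝ E (huniv ▸ hbounded)
  refine iUnion_eq_and_pairwise_disjoint_of_frontier (x₀ := x₀) ?_
    h.pairwise_disjoint_frontier_image ?_
    (fun i hi ↦ hx₀ (Or.inl (image_subset_hutchinson g _ i hi))) fun hV ↦ hx₀ (Or.inr hV)
  · simp only [h.frontier_image, ← image_iUnion]
    refine (image_frontier_eq_frontier hsep.isOpen_hutchinson ?_ h.source_eq.superset
      ?_).symm.subset.trans (image_mono hsep.frontier_hutchinson_subset)
    · exact isOpen_iUnion fun i ↦ (h.isHomeomorph i).isOpenMap S h.isOpen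
    · rw [← h.source_eq, e.image_source_eq_target, h.target_eq]
  · intro i z hz
    rw [← (h.isHomeomorph i).image_frontier, ← h.image_frontier] at hz
    obtain ⟨_, ⟨x, hx, rfl⟩, rfl⟩ := hz
    exact (h.hutchinson_eventuallyEq hx).symm

theorem separatedSystem_compl_image_compl [Nontrivial E] [Finite ι]
    (h : PastingProblem f g Q S e) : SeparatedSystem g (e '' Qᶜ)ᶜ := by
  have := FiniteDimensional.proper ℝ E
  obtain ⟨hunion, hdisjoint⟩ := h.iUnion_image_and_pairwise_disjoint
  have hopen (i : ι) : IsOpen (g i '' (e '' Qᶜ)ᶜ) :=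
    (h.isHomeomorph i).isOpenMap _ h.isOpen_compl_image_compl
  have hsubset : hutchinson g S ⊆ (e '' Qᶜ)ᶜ := subset_compl_comm.1 <|
    ((image_mono h.compl_subset_source).trans e.image_source_subset).trans_eq h.target_eq
  refine ⟨h.isHomeomorph, h.isOpen_compl_image_compl, h.isBounded_compl_image_compl, fun i ↦ ?_,
    fun i j hij ↦ ?_⟩
  · rw [closure_eq_self_union_frontier, ← h.image_frontier, image_union]
    refine union_subset ((subset_iUnion _ i).trans (hunion.subset.trans hsubset)) ?_
    rintro _ ⟨_, ⟨x, hx, rfl⟩, rfl⟩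
    exact h.apply_notMem_image_compl hx
  · rw [(h.isHomeomorph i).image_closure, (h.isHomeomorph j).image_closure,
      closure_eq_self_union_frontier (g j '' _)]
    refine Disjoint.union_right ((hdisjoint hij).closure_left (hopen j)) ?_
    rw [closure_eq_self_union_frontier]
    refine Disjoint.union_left ((hdisjoint hij).frontier_right (hopen i)) ?_
    exact h.pairwise_disjoint_frontier_image hij

theorem frontierConjugacy [Nontrivial E] [Finite ι] (h : PastingProblem f g Q S e) :
    FrontierConjugacy f g Q (e '' Qᶜ)ᶜ e where
  left := h.separatedSystem
  right := h.separatedSystem_compl_image_compl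
  source_eq := h.source_eq
  target_eq := by rw [h.target_eq, ← h.iUnion_image_and_pairwise_disjoint.1, hutchinson]
  image_compl := (compl_compl _).symm
  image_frontier := h.image_frontier
  apply_comm _ _ hx := h.apply_comm hx

end PastingProblem

end Pasting

/-! ### The homeomorphic extension -/

section Extension

universe u

variable {X : Type u} {Y ι : Type*} {f : ι → X → X} {g : ι → Y → Y} {Q : Set X} {φ : X → Y}

open Classical in
/-- One step of the pasting iteration: replace `φ` by `gᵢ ∘ Ψ ∘ fᵢ⁻¹` on each `fᵢ(closure Q)`. -/
noncomputable def pasteStep [TopologicalSpace X] (f : ι → X → X) (g : ι → Y → Y) (φ : X → Y)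
    (Ψ : closure Q → Y) (x : X) : Y :=
  if h : ∃ p : ι × closure Q, f p.1 p.2 = x then g h.choose.1 (Ψ h.choose.2) else φ x

section Step

variable [MetricSpace X] {Ψ : closure Q → Y}

theorem pasteStep_apply (h : SeparatedSystem f Q) (i : ι) (x : closure Q) :
    pasteStep f g φ Ψ (f i x) = g i (Ψ x) := by
  have hx : ∃ p : ι × closure Q, f p.1 p.2 = f i x := ⟨(i, x), rfl⟩
  obtain ⟨hi, hxx⟩ := h.eq_of_apply_eq hx.choose.2.2 x.2 hx.choose_spec
  rw [pasteStep, dif_pos hx, hi, Subtype.ext hxx]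

theorem pasteStep_of_notMem (h : SeparatedSystem f Q)
    (hcomm : ∀ i, ∀ x ∈ frontier Q, φ (f i x) = g i (φ x))
    (hΨ : ∀ x : closure Q, ↑x ∉ hutchinson f Q → Ψ x = φ x) {x : X} (hx : x ∉ hutchinson f Q) :
    pasteStep f g φ Ψ x = φ x := by
  by_cases hp : ∃ p : ι × closure Q, f p.1 p.2 = x
  · obtain ⟨⟨i, y⟩, rfl⟩ := hp
    have hyQ : ↑y ∉ Q := mt (h.apply_mem_hutchinson_iff y.2).2 hx
    rw [pasteStep_apply h, hΨ y fun hU ↦ hyQ (h.hutchinson_subset hU), hcomm]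
    exact h.isOpen.frontier_eq ▸ ⟨y.2, hyQ⟩
  · exact dif_neg hp

theorem continuous_pasteStep [TopologicalSpace Y] [Finite ι] (h : SeparatedSystem f Q)
    (hφ : ContinuousOn φ (hutchinson f Q)ᶜ) (hg : ∀ i, Continuous (g i))
    (hcomm : ∀ i, ∀ x ∈ frontier Q, φ (f i x) = g i (φ x)) (hΨc : Continuous Ψ)
    (hΨ : ∀ x : closure Q, ↑x ∉ hutchinson f Q → Ψ x = φ x) :
    Continuous (pasteStep f g φ Ψ) := by
  let P : Option ι → Set X := fun o ↦ o.elim (hutchinson f Q)ᶜ fun i ↦ f i '' closure Q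
  refine (locallyFinite_of_finite P).continuous (eq_univ_of_forall fun x ↦ mem_iUnion.2 ?_) ?_ ?_
  · by_cases hx : x ∈ hutchinson f Q
    · obtain ⟨i, hi⟩ := mem_iUnion.1 hx
      exact ⟨some i, image_mono subset_closure hi⟩
    · exact ⟨none, hx⟩
  · rintro (_ | i)
    · exact h.isOpen_hutchinson.isClosed_compl
    · exact (h.isHomeomorph i).isClosedMap _ isClosed_closure
  · rintro (_ | i)
    · exact hφ.congr fun x hx ↦ pasteStep_of_notMem h hcomm hΨ hx
    · refine ((h.isHomeomorph i).isInducing.continuousOn_image_iff).2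
        (continuousOn_iff_continuous_domRestrict.2 ?_)
      exact ((hg i).comp hΨc).congr fun x ↦ (pasteStep_apply h i x).symm

theorem dist_pasteStep_le [PseudoMetricSpace Y] {Ψ' : closure Q → Y} {ρ : ℝ≥0} {d : ℝ}
    (h : SeparatedSystem f Q) (hg : ∀ i, LipschitzWith ρ (g i))
    (hcomm : ∀ i, ∀ x ∈ frontier Q, φ (f i x) = g i (φ x))
    (hΨ : ∀ x : closure Q, ↑x ∉ hutchinson f Q → Ψ x = φ x)
    (hΨ' : ∀ x : closure Q, ↑x ∉ hutchinson f Q → Ψ' x = φ x)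
    (hd : ∀ x, dist (Ψ x) (Ψ' x) ≤ d) (x : closure Q) :
    dist (pasteStep f g φ Ψ x) (pasteStep f g φ Ψ' x) ≤ ρ * d := by
  by_cases hx : ↑x ∈ hutchinson f Q
  · obtain ⟨i, y, hy, hyx⟩ := mem_iUnion.1 hx
    rw [← hyx, pasteStep_apply h i ⟨y, subset_closure hy⟩,
      pasteStep_apply h i ⟨y, subset_closure hy⟩]
    exact ((hg i).dist_le_mul _ _).trans (mul_le_mul_of_nonneg_left (hd _) ρ.2)
  · rw [pasteStep_of_notMem h hcomm hΨ hx, pasteStep_of_notMem h hcomm hΨ' hx, dist_self]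
    exact mul_nonneg ρ.2 (dist_nonneg.trans (hd x))

end Step

/-- The extension is the fixed point of `pasteStep`, a contraction of the space of continuous maps
on `closure Q` that agree with `φ` off the first generation. -/
theorem exists_continuous_extension_forall_comm [MetricSpace X] [ProperSpace X] [MetricSpace Y]
    [CompleteSpace Y] [TietzeExtension.{u} Y] [Finite ι] (h : SeparatedSystem f Q) {ρ : ℝ≥0}
    (hρ : ρ < 1) (hg : ∀ i, LipschitzWith ρ (g i)) (hφ : ContinuousOn φ (hutchinson f Q)ᶜ)
    (hcomm : ∀ i, ∀ x ∈ frontier Q, φ (f i x) = g i (φ x)) :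
    ∃ Φ : X → Y, Continuous Φ ∧ EqOn Φ φ (hutchinson f Q)ᶜ ∧
      ∀ i, ∀ x ∈ closure Q, Φ (f i x) = g i (Φ x) := by
  have : CompactSpace (closure Q) := isCompact_iff_compactSpace.1 h.isBounded.isCompact_closure
  let Z : Set C(closure Q, Y) := {Ψ | ∀ x : closure Q, ↑x ∉ hutchinson f Q → Ψ x = φ x}
  have hZ : IsClosed Z := by
    simp only [Z, ofPred_forall]
    exact isClosed_iInter fun x ↦ isClosed_iInter fun _ ↦
      isClosed_eq (continuous_eval_const x) continuous_const
  have : CompleteSpace Z := hZ.completeSpace_coe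
  have : Nonempty Z := by
    obtain ⟨Ψ, hΨ⟩ := ContinuousMap.exists_restrict_eq h.isOpen_hutchinson.isClosed_compl
      ⟨_, hφ.domRestrict⟩
    exact ⟨Ψ.restrict (closure Q), fun x hx ↦ congrArg (· ⟨x, hx⟩) hΨ⟩
  have hc (Ψ : Z) : Continuous (pasteStep f g φ Ψ.1) :=
    continuous_pasteStep h hφ (fun i ↦ (hg i).continuous) hcomm Ψ.1.continuous Ψ.2
  have hoff (Ψ : Z) : EqOn (pasteStep f g φ Ψ.1) φ (hutchinson f Q)ᶜ := fun x hx ↦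
    pasteStep_of_notMem h hcomm Ψ.2 hx
  let T : Z → Z := fun Ψ ↦ ⟨⟨fun x ↦ pasteStep f g φ Ψ.1 x, (hc Ψ).comp continuous_subtype_val⟩,
    fun x hx ↦ hoff Ψ hx⟩
  have hT : ContractingWith ρ T :=
    ⟨hρ, LipschitzWith.of_dist_le_mul fun Ψ Ψ' ↦ (ContinuousMap.dist_le (by positivity)).2 fun x ↦
      dist_pasteStep_le h hg hcomm Ψ.2 Ψ'.2 (fun y ↦ ContinuousMap.dist_apply_le_dist y) x⟩
  let Ψ := hT.fixedPoint T
  have hfix (x : closure Q) : pasteStep f g φ Ψ.1 x = Ψ.1 x :=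
    congrArg (fun Ψ : Z ↦ Ψ.1 x) hT.fixedPoint_isFixedPt
  refine ⟨pasteStep f g φ Ψ.1, hc Ψ, hoff Ψ, fun i x hx ↦ ?_⟩
  rw [hfix ⟨x, hx⟩, pasteStep_apply h i ⟨x, hx⟩]

end Extension

section Homeomorph

variable {E ι : Type*}

theorem nonpos_of_le_mul [TopologicalSpace E] {C : Set E} {u : E → ℝ} {ρ : ℝ≥0}
    (hC : IsCompact C) (hu : ContinuousOn u C) (hρ : ρ < 1)
    (h : ∀ x ∈ C, u x ≤ 0 ∨ ∃ y ∈ C, u x ≤ ρ * u y) {x : E} (hx : x ∈ C) : u x ≤ 0 := by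
  obtain ⟨m, hm, hmax⟩ := hC.exists_isMaxOn ⟨x, hx⟩ hu
  refine (hmax hx).trans ?_
  rcases h m hm with hm0 | ⟨y, hy, hmy⟩
  · exact hm0
  · have hρy : ρ * u y ≤ ρ * u m := mul_le_mul_of_nonneg_left (hmax hy) ρ.2
    exact not_lt.1 fun hpos ↦ (mul_lt_of_lt_one_left hpos hρ).not_ge (hmy.trans hρy)

theorem frontier_nonempty_of_isBounded [NormedAddCommGroup E] [NormedSpace ℝ E] [Nontrivial E]
    {A : Set E} (hA : Bornology.IsBounded A) (hne : A.Nonempty) : (frontier A).Nonempty :=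
  nonempty_frontier_iff.2 ⟨hne, fun h ↦ NormedSpace.unbounded_univ ℝ E (h ▸ hA)⟩

namespace FrontierConjugacy

section Metric

variable [MetricSpace E] {f g : ι → E → E} {Q S : Set E} {e : PartialHomeomorph E E} {x : E}

theorem compl_subset_source (h : FrontierConjugacy f g Q S e) : Qᶜ ⊆ e.source := by
  rw [h.source_eq]
  exact compl_subset_compl.2 h.left.hutchinson_subset

theorem frontier_subset_source (h : FrontierConjugacy f g Q S e) : frontier Q ⊆ e.source :=
  fun _ hx ↦ h.compl_subset_source (h.left.notMem_of_mem_frontier hx)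

protected theorem symm (h : FrontierConjugacy f g Q S e) : FrontierConjugacy g f S Q e.symm where
  left := h.right
  right := h.left
  source_eq := h.target_eq
  target_eq := h.source_eq
  image_compl := by
    rw [← h.image_compl, (e.leftInvOn.mono h.compl_subset_source).image_image]
  image_frontier := by
    rw [← h.image_frontier, (e.leftInvOn.mono h.frontier_subset_source).image_image]
  apply_comm i y hy := by
    rw [← h.image_frontier] at hy
    obtain ⟨x, hx, rfl⟩ := hy
    have hfx : f i x ∈ e.source := by
      rw [h.source_eq]
      exact h.left.apply_notMem_hutchinson hx
    rw [← h.apply_comm i x hx, e.left_inv hfx, e.left_inv (h.frontier_subset_source hx)]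

theorem apply_mem_closure (h : FrontierConjugacy f g Q S e) (hx : x ∈ closure Q)
    (hxU : x ∉ hutchinson f Q) : e x ∈ closure S := by
  by_cases hxQ : x ∈ Q
  · refine subset_closure (by_contra fun hxS ↦ ?_)
    obtain ⟨y, hy, hyx⟩ : e x ∈ e '' Qᶜ := h.image_compl ▸ hxS
    exact hy (e.injOn (h.compl_subset_source hy) (h.source_eq ▸ hxU) hyx ▸ hxQ)
  · exact frontier_subset_closure (h.image_frontier ▸
      mem_image_of_mem e (h.left.isOpen.frontier_eq ▸ ⟨hx, hxQ⟩))

theorem leftInverse [ProperSpace E] (h : FrontierConjugacy f g Q S e) {ρ : ℝ≥0} (hρ : ρ < 1)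
    (hf : ∀ i, LipschitzWith ρ (f i)) {Φ Ψ : E → E} (hΦ : Continuous Φ) (hΨ : Continuous Ψ)
    (hΦe : EqOn Φ e (hutchinson f Q)ᶜ) (hΨe : EqOn Ψ e.symm (hutchinson g S)ᶜ)
    (hΦf : ∀ i, ∀ x ∈ closure Q, Φ (f i x) = g i (Φ x))
    (hΨg : ∀ i, ∀ x ∈ closure S, Ψ (g i x) = f i (Ψ x))
    (hmaps : MapsTo Φ (closure Q) (closure S)) : Function.LeftInverse Ψ Φ := by
  have hoff : ∀ x ∉ hutchinson f Q, Ψ (Φ x) = x := fun x hx ↦ by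
    have hxe : x ∈ e.source := h.source_eq ▸ hx
    rw [hΦe hx, hΨe (h.target_eq ▸ e.map_source hxe), e.left_inv hxe]
  intro x
  by_cases hx : x ∈ hutchinson f Q
  · refine dist_le_zero.1 (nonpos_of_le_mul (u := fun x ↦ dist (Ψ (Φ x)) x)
      h.left.isBounded.isCompact_closure (by fun_prop) hρ (fun y _ ↦ ?_)
      (subset_closure (h.left.hutchinson_subset hx)))
    by_cases hy : y ∈ hutchinson f Q
    · obtain ⟨i, z, hz, rfl⟩ := mem_iUnion.1 hy
      refine Or.inr ⟨z, subset_closure hz, ?_⟩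
      rw [hΦf i z (subset_closure hz), hΨg i _ (hmaps (subset_closure hz))]
      exact (hf i).dist_le_mul _ _
    · exact Or.inl (dist_le_zero.2 (hoff y hy))
  · exact hoff x hx

end Metric

variable [NormedAddCommGroup E] [NormedSpace ℝ E] [FiniteDimensional ℝ E] [Nontrivial E]
  {f g : ι → E → E} {Q S : Set E} {e : PartialHomeomorph E E}

theorem mapsTo_closure (h : FrontierConjugacy f g Q S e) {ρ : ℝ≥0} (hρ : ρ < 1)
    (hg : ∀ i, LipschitzWith ρ (g i)) {Φ : E → E} (hΦ : Continuous Φ)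
    (hΦe : EqOn Φ e (hutchinson f Q)ᶜ)
    (hΦf : ∀ i, ∀ x ∈ closure Q, Φ (f i x) = g i (Φ x)) :
    MapsTo Φ (closure Q) (closure S) := by
  have := FiniteDimensional.proper ℝ E
  intro x hx
  have hS : (closure S).Nonempty := by
    have hQ := frontier_nonempty_of_isBounded h.left.isBounded (closure_nonempty_iff.1 ⟨x, hx⟩)
    exact (h.image_frontier ▸ hQ.image e).mono frontier_subset_closure
  refine (isClosed_closure.mem_iff_infDist_zero hS).2 (le_antisymm ?_ infDist_nonneg)
  refine nonpos_of_le_mul (u := fun x ↦ infDist (Φ x) (closure S))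
    h.left.isBounded.isCompact_closure ((continuous_infDist_pt _).comp hΦ).continuousOn hρ
    (fun y hy ↦ ?_) hx
  by_cases hyU : y ∈ hutchinson f Q
  · obtain ⟨i, z, hz, rfl⟩ := mem_iUnion.1 hyU
    refine Or.inr ⟨z, subset_closure hz, ?_⟩
    obtain ⟨s, hs, hsz⟩ := isClosed_closure.exists_infDist_eq_dist hS (Φ z)
    rw [hΦf i z (subset_closure hz), hsz]
    exact (infDist_le_dist_of_mem (subset_closure (h.right.apply_mem i hs))).trans
      ((hg i).dist_le_mul _ _)
  · rw [hΦe hyU]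
    exact Or.inl (infDist_zero_of_mem (h.apply_mem_closure hy hyU)).le

theorem exists_homeomorph [Finite ι] (h : FrontierConjugacy f g Q S e) {ρ : ℝ≥0} (hρ : ρ < 1)
    (hf : ∀ i, LipschitzWith ρ (f i)) (hg : ∀ i, LipschitzWith ρ (g i)) :
    ∃ Φ : E ≃ₜ E, EqOn Φ e (hutchinson f Q)ᶜ ∧ ∀ i, ∀ x ∈ closure Q, Φ (f i x) = g i (Φ x) := by
  have := FiniteDimensional.proper ℝ E
  obtain ⟨Φ, hΦ, hΦe, hΦf⟩ := exists_continuous_extension_forall_comm h.left hρ hg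
    (h.source_eq ▸ e.continuousOn) h.apply_comm
  obtain ⟨Ψ, hΨ, hΨe, hΨg⟩ := exists_continuous_extension_forall_comm h.right hρ hf
    (h.target_eq ▸ e.continuousOn_symm) h.symm.apply_comm
  have hΨΦ : Function.LeftInverse Ψ Φ := h.leftInverse hρ hf hΦ hΨ hΦe hΨe hΦf hΨg
    (h.mapsTo_closure hρ hg hΦ hΦe hΦf)
  have hΦΨ : Function.LeftInverse Φ Ψ := h.symm.leftInverse hρ hg hΨ hΦ hΨe hΦe hΨg hΦf
    (h.symm.mapsTo_closure hρ hf hΨ hΨe hΨg)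
  exact ⟨⟨⟨Φ, Ψ, hΨΦ, hΦΨ⟩, hΦ, hΨ⟩, hΦe, hΦf⟩

end FrontierConjugacy

end Homeomorph

/-! ### The invariant set -/

section InvariantSet

variable {X ι : Type*}

theorem iUnion_iterComp_image (f : ι → X → X) (A : Set X) (k : ℕ) :
    ⋃ w : Fin k → ι, iterComp f (List.ofFn w) '' A = (hutchinson f)^[k] A := by
  induction k with
  | zero => exact iUnion_const (ι := Fin 0 → ι) (id '' A) |>.trans (image_id A)
  | succ k ih =>
    have hcons (i : ι) (w : Fin k → ι) : iterComp f (List.ofFn (Fin.consEquiv (fun _ ↦ ι) (i, w))) =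
        f i ∘ iterComp f (List.ofFn w) := by
      rw [Fin.consEquiv, Equiv.coe_fn_mk, List.ofFn_cons, iterComp]
    rw [Function.iterate_succ_apply', ← ih, ← (Fin.consEquiv fun _ ↦ ι).surjective.iUnion_comp,
      iUnion_prod']
    simp only [hcons, hutchinson, image_iUnion, image_comp]

variable {f g : ι → X → X}

theorem image_iterate_hutchinson {Φ : X → X} {C : Set X} (hC : hutchinson f C ⊆ C)
    (hΦ : ∀ i, ∀ x ∈ C, Φ (f i x) = g i (Φ x)) (k : ℕ) :
    Φ '' (hutchinson f)^[k] C = (hutchinson g)^[k] (Φ '' C) := by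
  induction k with
  | zero => rfl
  | succ k ih =>
    have hk : (hutchinson f)^[k] C ⊆ C :=
      (hutchinson_mono f).antitone_iterate_of_map_le hC (Nat.zero_le k)
    simp only [Function.iterate_succ_apply', ← ih, hutchinson, image_iUnion, image_image]
    exact iUnion_congr fun i ↦ image_congr fun x hx ↦ hΦ i x (hk hx)

variable [MetricSpace X] {Q S : Set X}

theorem invariantSet_eq_iInter (f : ι → X → X) (Q : Set X) :
    invariantSet f Q = ⋂ k, (hutchinson f)^[k] (closure Q) := by
  simp only [invariantSet, iUnion_iterComp_image]

theorem hutchinson_closure_subset (h : ∀ i, f i '' closure Q ⊆ Q) :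
    hutchinson f (closure Q) ⊆ closure Q :=
  iUnion_subset fun i ↦ (h i).trans subset_closure

theorem invariantSet_subset (h : ∀ i, f i '' closure Q ⊆ Q) : invariantSet f Q ⊆ Q := by
  rw [invariantSet_eq_iInter]
  exact (iInter_subset _ 1).trans (iUnion_subset h)

theorem invariantSet_eq_iInter_hutchinson (h : ∀ i, f i '' closure Q ⊆ Q) :
    invariantSet f Q = ⋂ k, (hutchinson f)^[k] (hutchinson f (closure Q)) := by
  rw [invariantSet_eq_iInter]
  simp only [← Function.iterate_succ_apply]
  exact (((hutchinson_mono f).antitone_iterate_of_map_le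
    (hutchinson_closure_subset h)).iInf_nat_add 1).symm

theorem image_invariantSet {Φ : X → X} (hbij : Function.Bijective Φ)
    (hf : ∀ i, f i '' closure Q ⊆ Q) (hg : ∀ i, g i '' closure S ⊆ S)
    (hΦ : ∀ i, ∀ x ∈ closure Q, Φ (f i x) = g i (Φ x))
    (himage : Φ '' hutchinson f (closure Q) = hutchinson g (closure S)) :
    Φ '' invariantSet f Q = invariantSet g S := by
  have hsub := hutchinson_closure_subset hf
  rw [invariantSet_eq_iInter_hutchinson hf, invariantSet_eq_iInter_hutchinson hg,
    image_iInter hbij, ← himage]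
  exact iInter_congr (image_iterate_hutchinson (hutchinson_mono f hsub)
    fun i x hx ↦ hΦ i x (hsub hx))

namespace SeparatedSystem

theorem isCompact_invariantSet [ProperSpace X] [Finite ι] (h : SeparatedSystem f Q) :
    IsCompact (invariantSet f Q) := by
  have hcompact (k : ℕ) : IsCompact ((hutchinson f)^[k] (closure Q)) := by
    induction k with
    | zero => exact h.isBounded.isCompact_closure
    | succ k ih =>
      rw [Function.iterate_succ_apply']
      exact isCompact_iUnion fun i ↦ ih.image (h.isHomeomorph i).continuous
  rw [invariantSet_eq_iInter]
  exact (hcompact 0).of_isClosed_subset (isClosed_iInter fun k ↦ (hcompact k).isClosed)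
    (iInter_subset _ 0)

theorem exists_mem_invariantSet_apply_eq (h : SeparatedSystem f Q) {x : X}
    (hx : x ∈ invariantSet f Q) : ∃ i, ∃ y ∈ invariantSet f Q, f i y = x := by
  have hsub := hutchinson_closure_subset h.strongSeparation.1
  rw [invariantSet_eq_iInter] at hx ⊢
  rw [mem_iInter] at hx
  obtain ⟨i, y, hy, rfl⟩ := mem_iUnion.1 (hx 1)
  refine ⟨i, y, mem_iInter.2 fun k ↦ ?_, rfl⟩
  have hxk := hx (k + 1)
  rw [Function.iterate_succ_apply'] at hxk
  obtain ⟨j, z, hz, hzx⟩ := mem_iUnion.1 hxk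
  have hzQ : z ∈ closure Q := (hutchinson_mono f).antitone_iterate_of_map_le hsub (Nat.zero_le k) hz
  exact (h.eq_of_apply_eq hzQ hy hzx).2 ▸ hz

theorem eventually_apply_mem_hutchinson_iff [Finite ι] (h : SeparatedSystem f Q) (i : ι) {x : X}
    (hx : x ∈ closure Q) : ∀ᶠ y in 𝓝 x, f i y ∈ hutchinson f Q ↔ y ∈ Q := by
  filter_upwards [(h.isHomeomorph i).continuous.continuousAt.eventually
    (h.hutchinson_eventuallyEq_image hx)] with y hy
  exact hy.to_iff.trans (h.isHomeomorph i).injective.mem_set_image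

end SeparatedSystem

end InvariantSet

section Pasted

variable {E ι : Type*}

theorem exists_partialHomeomorph_of_isHomeoOn {X : Type*} [TopologicalSpace X] [Nonempty X]
    {φ : X → X} {Ω Ω' : Set X} (h : IsHomeoOn φ Ω Ω') :
    ∃ e : PartialHomeomorph X X, e.source = Ω ∧ e.target = Ω' ∧ ⇑e = φ := by
  obtain ⟨e, he⟩ := h
  have hbij : BijOn φ Ω Ω' := by
    refine ⟨fun x hx ↦ he ⟨x, hx⟩ ▸ (e ⟨x, hx⟩).2, fun x hx y hy hxy ↦ ?_, fun z hz ↦ ?_⟩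
    · have hexy : e ⟨x, hx⟩ = e ⟨y, hy⟩ := Subtype.ext (by rw [he, he, hxy])
      exact congrArg Subtype.val (e.injective hexy)
    · exact ⟨e.symm ⟨z, hz⟩, (e.symm ⟨z, hz⟩).2, by rw [← he, e.apply_symm_apply]⟩
  have heq : ⇑hbij.toPartialEquiv.toEquiv = e := funext fun x ↦ Subtype.ext (he x).symm
  exact ⟨.ofIsHomeomorphToEquiv hbij.toPartialEquiv (heq ▸ e.isHomeomorph), rfl, rfl, rfl⟩

theorem eventually_comm_of_infDist_le [MetricSpace E] {f g : ι → E → E} {Q : Set E}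
    {φ : E → E} {ε : ℝ} (hε : 0 < ε)
    (hcomm : ∀ y ∉ Q, infDist y Q ≤ ε → ∀ i, φ (f i y) = g i (φ y)) (i : ι) {x : E}
    (hx : x ∈ frontier Q) : ∀ᶠ y in 𝓝[Qᶜ] x, φ (f i y) = g i (φ y) := by
  have hx0 : infDist x Q < ε := by
    rwa [infDist_zero_of_mem_closure (frontier_subset_closure hx)]
  filter_upwards [self_mem_nhdsWithin, mem_nhdsWithin_of_mem_nhds
    ((continuous_infDist_pt Q).continuousAt.eventually_lt_const hx0)] with y hyQ hy
  exact hcomm y hyQ hy.le i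

namespace PastingProblem

variable [MetricSpace E] {f g : ι → E → E} {Q S : Set E} {e : PartialHomeomorph E E} {Φ : E ≃ₜ E}

theorem eventually_apply_comm [Finite ι] (h : PastingProblem f g Q S e)
    (hΦe : EqOn Φ e (hutchinson f Q)ᶜ) (hΦ : ∀ i, ∀ x ∈ closure Q, Φ (f i x) = g i (Φ x)) (i : ι)
    {x : E} (hx : x ∈ closure Q) : ∀ᶠ y in 𝓝 x, Φ (f i y) = g i (Φ y) := by
  have hsep := h.separatedSystem
  by_cases hxQ : x ∈ Q
  · filter_upwards [hsep.isOpen.mem_nhds hxQ] with y hy using hΦ i y (subset_closure hy)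
  · filter_upwards [eventually_nhdsWithin_iff.1
        (h.eventually_comm i x (hsep.isOpen.frontier_eq ▸ ⟨hx, hxQ⟩)),
      hsep.eventually_apply_mem_hutchinson_iff i hx] with y hcomm hmem
    by_cases hy : y ∈ Q
    · exact hΦ i y (subset_closure hy)
    · rw [hΦe (mt hmem.1 hy), hΦe fun hU ↦ hy (hsep.hutchinson_subset hU), hcomm hy]

theorem image_hutchinson_closure [Finite ι] (h : PastingProblem f g Q S e)
    (hΦe : EqOn Φ e (hutchinson f Q)ᶜ) :
    Φ '' hutchinson f (closure Q) = hutchinson g (closure S) := by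
  rw [← closure_hutchinson h.separatedSystem.isHomeomorph, ← closure_hutchinson h.isHomeomorph,
    Φ.image_closure]
  congr 1
  rw [← compl_inj_iff, ← image_compl_eq Φ.bijective, hΦe.image_eq, ← h.source_eq,
    e.image_source_eq_target, h.target_eq]

end PastingProblem

end Pasted

/-! ### Linear dilatation -/

section LinearDilatation

variable {X : Type*} [MetricSpace X]

theorem quasiconformalOn_of_forall_qcH_le {Ω : Set X} {Φ : X → X} {H : ℝ≥0∞} (hH : H ≠ ∞)
    (h : ∀ x ∈ Ω, qcH Ω Φ x ≤ H) : QuasiconformalOn Ω Φ := by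
  refine ⟨max 1 H.toReal, le_max_left _ _, fun x hx ↦ (h x hx).trans ?_⟩
  exact (ENNReal.le_ofReal_iff_toReal_le hH (by positivity)).2 (le_max_right _ _)

theorem exists_pos_forall_le_edist (Φ : X ≃ₜ X) {K : Set X} (hK : IsCompact K) {η : ℝ}
    (hη : 0 < η) : ∃ c : ℝ≥0∞, 0 < c ∧ ∀ z ∈ K, ∀ y, η ≤ dist z y → c ≤ edist (Φ z) (Φ y) := by
  obtain ⟨c, hc, h⟩ := mem_uniformity_edist.1
    ((hK.image Φ.continuous).uniformContinuousAt_of_continuousAt Φ.symm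
      (fun a _ ↦ Φ.symm.continuous.continuousAt) (dist_mem_uniformity hη))
  refine ⟨c, hc, fun z hz y hzy ↦ not_lt.1 fun hlt ↦ hzy.not_gt ?_⟩
  simpa only [Φ.symm_apply_apply, mem_ofPred_eq] using h hlt (mem_image_of_mem Φ hz)

theorem qcH_univ_le_max_one_of_eventuallyEq {Φ : X ≃ₜ X} {φ : X → X} {Ω : Set X} {x : X}
    (hΩ : Ω ∈ 𝓝 x) (hφ : Φ =ᶠ[𝓝 x] φ) : qcH univ Φ x ≤ max (qcH Ω φ x) 1 := by
  obtain ⟨δ, hδ, hball⟩ := nhds_basis_closedBall.mem_iff.1 (inter_mem hΩ hφ)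
  have hx : Φ x = φ x := hφ.self_of_nhds
  obtain ⟨c, hc, hfar⟩ := exists_pos_forall_le_edist Φ isCompact_singleton hδ
  obtain ⟨η, hη, hnear⟩ := nhds_basis_closedBall.mem_iff.1
    (Φ.continuous.continuousAt.preimage_mem_nhds (closedEBall_mem_nhds (Φ x) hc))
  have hdil {r : ℝ} (hr : r ≤ δ) : linDil univ Φ x r ≤ linDil Ω φ x r :=
    iSup₂_le fun y hy ↦ by
      obtain ⟨hyΩ, hyφ⟩ := hball (mem_closedBall'.2 (hy.2.trans hr))
      rw [hx, hyφ]
      exact le_iSup₂_of_le y ⟨hyΩ, hy.2⟩ le_rfl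
  have hdilc {r : ℝ} (hr : r ≤ η) : linDil univ Φ x r ≤ c :=
    iSup₂_le fun y hy ↦ edist_comm (Φ x) _ ▸ hnear (mem_closedBall'.2 (hy.2.trans hr))
  have hcon (r : ℝ) : min (linCon Ω φ x r) c ≤ linCon univ Φ x r := le_iInf₂ fun y hy ↦ by
    rcases le_total (dist x y) δ with hyδ | hyδ
    · obtain ⟨hyΩ, hyφ⟩ := hball (mem_closedBall'.2 hyδ)
      rw [hx, hyφ]
      exact (min_le_left _ _).trans (iInf₂_le y ⟨hyΩ, hy.2⟩)
    · exact (min_le_right _ _).trans (hfar x rfl y hyδ)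
  calc qcH univ Φ x
      ≤ limsup (fun r ↦ max (linDil Ω φ x r / linCon Ω φ x r) 1) (𝓝[>] 0) := by
        refine limsup_le_limsup ?_
        filter_upwards [Ioo_mem_nhdsGT (lt_min hδ hη)] with r hr
        have hrδη := le_min_iff.1 hr.2.le
        refine (ENNReal.div_le_div_left (hcon r) _).trans ?_
        rcases min_choice (linCon Ω φ x r) c with hmin | hmin <;> rw [hmin]
        · exact le_max_of_le_left (ENNReal.div_le_div_right (hdil hrδη.1) _)
        · exact le_max_of_le_right (ENNReal.div_le_of_le_mul ((hdilc hrδη.2).trans_eq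
            (one_mul c).symm))
    _ = max (qcH Ω φ x) 1 := by rw [limsup_max, limsup_const, qcH]

theorem edist_apply_of_isSimilarityWith {s : ℝ} {F : X → X} (hF : IsSimilarityWith s F) (x y : X) :
    edist (F x) (F y) = ENNReal.ofReal s * edist x y := by
  rw [edist_dist, edist_dist, hF.2, ENNReal.ofReal_mul hF.1.le]

section Semiconj

variable {Φ Ψ F G : X → X} {s t : ℝ}

theorem linDil_univ_of_semiconj (hF : IsSimilarityWith s F) (hF' : Function.Surjective F)
    (hG : IsSimilarityWith t G) (h : ∀ y, Ψ (F y) = G (Φ y)) (x : X) (r : ℝ) :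
    linDil univ Ψ (F x) r = ENNReal.ofReal t * linDil univ Φ x (r / s) := by
  rw [linDil, ← hF'.iSup_comp, linDil]
  simp only [mem_univ, true_and, mem_ofPred_eq, h, hF.2,
    edist_apply_of_isSimilarityWith hG, ENNReal.mul_iSup, le_div_iff₀' hF.1]

theorem linCon_univ_of_semiconj (hF : IsSimilarityWith s F) (hF' : Function.Surjective F)
    (hG : IsSimilarityWith t G) (h : ∀ y, Ψ (F y) = G (Φ y)) (x : X) (r : ℝ) :
    linCon univ Ψ (F x) r = ENNReal.ofReal t * linCon univ Φ x (r / s) := by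
  have ht : ENNReal.ofReal t ≠ 0 := ENNReal.ofReal_ne_zero_iff.2 hG.1
  rw [linCon, ← hF'.iInf_comp, linCon]
  simp only [mem_univ, true_and, mem_ofPred_eq, h, hF.2,
    edist_apply_of_isSimilarityWith hG, ENNReal.mul_iInf_of_ne ht ENNReal.ofReal_ne_top,
    div_le_iff₀' hF.1]

theorem qcH_univ_le_of_semiconj (hF : IsSimilarityWith s F) (hF' : Function.Surjective F)
    (hG : IsSimilarityWith t G) (h : ∀ y, Ψ (F y) = G (Φ y)) (x : X) :
    qcH univ Ψ (F x) ≤ qcH univ Φ x := by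
  have ht : ENNReal.ofReal t ≠ 0 := ENNReal.ofReal_ne_zero_iff.2 hG.1
  have hscale : Tendsto (fun r ↦ r / s) (𝓝[>] 0) (𝓝[>] 0) := by
    refine tendsto_nhdsWithin_iff.2 ⟨?_, eventually_mem_nhdsWithin.mono fun r hr ↦ div_pos hr hF.1⟩
    simpa only [zero_div, id] using (tendsto_id.div_const s).mono_left
      (nhdsWithin_le_nhds (a := (0 : ℝ)) (s := Ioi 0))
  calc qcH univ Ψ (F x)
      = limsup ((fun r ↦ linDil univ Φ x r / linCon univ Φ x r) ∘ fun r ↦ r / s) (𝓝[>] 0) := by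
        simp only [qcH, linDil_univ_of_semiconj hF hF' hG h, linCon_univ_of_semiconj hF hF' hG h,
          ENNReal.mul_div_mul_left _ _ ht ENNReal.ofReal_ne_top, Function.comp_def]
    _ ≤ qcH univ Φ x := (limsup_comp _ _ _).trans_le (limsup_le_limsup_of_le hscale)

end Semiconj

theorem qcH_univ_apply_le_max_one {Φ : X ≃ₜ X} {F G : X → X} {s t : ℝ}
    (hF : IsSimilarityWith s F) (hF' : IsHomeomorph F) (hG : IsSimilarityWith t G) {x : X}
    (h : ∀ᶠ y in 𝓝 x, Φ (F y) = G (Φ y)) : qcH univ Φ (F x) ≤ max (qcH univ Φ x) 1 := by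
  let F' := hF'.homeomorph
  let Ψ : X → X := fun z ↦ G (Φ (F'.symm z))
  have hΨ : Φ =ᶠ[𝓝 (F x)] Ψ := by
    have hx : F'.symm (F x) = x := F'.symm_apply_apply x
    filter_upwards [(F'.symm.continuous.tendsto' _ _ hx).eventually h] with z hz
    exact (congrArg Φ (F'.apply_symm_apply z).symm).trans hz
  refine (qcH_univ_le_max_one_of_eventuallyEq univ_mem hΨ).trans (max_le_max_right 1 ?_)
  exact qcH_univ_le_of_semiconj hF hF'.surjective hG
    (fun y ↦ congrArg (fun z ↦ G (Φ z)) (F'.symm_apply_apply y)) x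

theorem PastingProblem.qcH_univ_le_of_notMem_invariantSet {ι : Type*} [Finite ι] {f g : ι → X → X}
    {Q S : Set X} {e : PartialHomeomorph X X} {Φ : X ≃ₜ X} (h : PastingProblem f g Q S e)
    (hΦe : EqOn Φ e (hutchinson f Q)ᶜ) (hΦ : ∀ i, ∀ x ∈ closure Q, Φ (f i x) = g i (Φ x))
    {rf rg : ι → ℝ} (hf : ∀ i, IsSimilarityWith (rf i) (f i))
    (hg : ∀ i, IsSimilarityWith (rg i) (g i)) {H : ℝ≥0∞} (hH : 1 ≤ H)
    (he : ∀ x ∈ (hutchinson f Q)ᶜ, qcH (hutchinson f Q)ᶜ e x ≤ H) {x : X}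
    (hx : x ∉ invariantSet f Q) : qcH univ Φ x ≤ H := by
  have hsep := h.separatedSystem
  have hout {x : X} (hx : x ∉ hutchinson f (closure Q)) : qcH univ Φ x ≤ H := by
    rw [← closure_hutchinson hsep.isHomeomorph, ← mem_compl_iff, ← interior_compl,
      mem_interior_iff_mem_nhds] at hx
    exact (qcH_univ_le_max_one_of_eventuallyEq hx (hΦe.eventuallyEq_of_mem hx)).trans
      (max_le (he x (mem_of_mem_nhds hx)) hH)
  rw [invariantSet_eq_iInter, mem_iInter, not_forall] at hx
  obtain ⟨k, hk⟩ := hx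
  induction k generalizing x with
  | zero => exact hout fun hx ↦ hk (hutchinson_closure_subset hsep.strongSeparation.1 hx)
  | succ k ih =>
    by_cases hxC : x ∈ hutchinson f (closure Q)
    · obtain ⟨i, y, hy, rfl⟩ := mem_iUnion.1 hxC
      have hyk : y ∉ (hutchinson f)^[k] (closure Q) := fun hyk ↦ hk <| by
        rw [Function.iterate_succ_apply']
        exact image_subset_hutchinson f _ i (mem_image_of_mem _ hyk)
      exact (qcH_univ_apply_le_max_one (hf i) (hsep.isHomeomorph i) (hg i)
        (h.eventually_apply_comm hΦe hΦ i hy)).trans (max_le (ih hyk) hH)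
    · exact hout hxC

end LinearDilatation

section DilatationOnInvariantSet

variable {X : Type*} [MetricSpace X]

/-- On `C`, the map `Φ` conjugates the similarity `F`, which maps `C` into itself, to the
similarity `G`; `s` and `t` are the ratios of `F` and `G`. -/
structure SimilarityConjugacy (Φ : X → X) (C : Set X) (F G : X → X) (s t : ℝ) : Prop where
  left : IsSimilarityWith s F
  right : IsSimilarityWith t G
  left_surjective : Function.Surjective F
  right_surjective : Function.Surjective G
  mapsTo : MapsTo F C C
  apply_comm : ∀ x ∈ C, Φ (F x) = G (Φ x)

namespace SimilarityConjugacy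

variable {Φ F F' G G' : X → X} {C : Set X} {s s' t t' : ℝ}

protected theorem id (Φ : X → X) (C : Set X) : SimilarityConjugacy Φ C id id 1 1 where
  left := ⟨one_pos, fun x y ↦ (one_mul (dist x y)).symm⟩
  right := ⟨one_pos, fun x y ↦ (one_mul (dist x y)).symm⟩
  left_surjective := Function.surjective_id
  right_surjective := Function.surjective_id
  mapsTo := mapsTo_id C
  apply_comm _ _ := rfl

protected theorem comp (h : SimilarityConjugacy Φ C F G s t)
    (h' : SimilarityConjugacy Φ C F' G' s' t') :
    SimilarityConjugacy Φ C (F ∘ F') (G ∘ G') (s * s') (t * t') where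
  left := ⟨mul_pos h.left.1 h'.left.1, fun x y ↦ by
    rw [Function.comp_apply, Function.comp_apply, h.left.2, h'.left.2, mul_assoc]⟩
  right := ⟨mul_pos h.right.1 h'.right.1, fun x y ↦ by
    rw [Function.comp_apply, Function.comp_apply, h.right.2, h'.right.2, mul_assoc]⟩
  left_surjective := h.left_surjective.comp h'.left_surjective
  right_surjective := h.right_surjective.comp h'.right_surjective
  mapsTo := h.mapsTo.comp h'.mapsTo
  apply_comm x hx := by
    rw [Function.comp_apply, h.apply_comm _ (h'.mapsTo hx), h'.apply_comm x hx,
      Function.comp_apply]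

variable {z : X} {c : ℝ≥0∞} {d m r : ℝ}

theorem linDil_univ_le (h : SimilarityConjugacy Φ C F G s t) (hz : z ∈ C)
    (hball : closedBall z d ⊆ C) (hr : r ≤ s * d) :
    linDil univ Φ (F z) r ≤ ENNReal.ofReal t * ediam (Φ '' C) := by
  refine iSup₂_le fun w hw ↦ ?_
  obtain ⟨y, rfl⟩ := h.left_surjective w
  have hzy : dist z y ≤ d := le_of_mul_le_mul_left (h.left.2 z y ▸ hw.2.trans hr) h.left.1
  have hy : y ∈ C := hball (mem_closedBall'.2 hzy)
  rw [h.apply_comm z hz, h.apply_comm y hy, edist_apply_of_isSimilarityWith h.right]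
  gcongr
  exact edist_le_ediam_of_mem (mem_image_of_mem Φ hz) (mem_image_of_mem Φ hy)

theorem le_linCon_univ (h : SimilarityConjugacy Φ C F G s t) (hΦ : Function.Bijective Φ)
    (hz : z ∈ C) (hball : closedBall z d ⊆ C) (hmd : m ≤ d) (hr : s * m ≤ r)
    (hc : ∀ y, m ≤ dist z y → c ≤ edist (Φ z) (Φ y)) :
    ENNReal.ofReal t * c ≤ linCon univ Φ (F z) r := by
  refine le_iInf₂ fun w hw ↦ ?_
  obtain ⟨y, hy⟩ := (h.right_surjective.comp hΦ.surjective) (Φ w)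
  rw [h.apply_comm z hz, ← hy, Function.comp_apply, edist_apply_of_isSimilarityWith h.right]
  gcongr
  apply hc
  by_cases hyC : y ∈ C
  · obtain rfl : F y = w := hΦ.injective ((h.apply_comm y hyC).trans hy)
    exact le_of_mul_le_mul_left (h.left.2 z y ▸ hr.trans hw.2) h.left.1
  · exact hmd.trans (not_le.1 fun hzy ↦ hyC (hball (mem_closedBall'.2 hzy))).le

theorem linDil_div_linCon_le (h : SimilarityConjugacy Φ C F G s t) (hΦ : Function.Bijective Φ)
    (hz : z ∈ C) (hball : closedBall z d ⊆ C) (hmd : m ≤ d) (hrd : r ≤ s * d) (hrm : s * m ≤ r)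
    (hc : ∀ y, m ≤ dist z y → c ≤ edist (Φ z) (Φ y)) :
    linDil univ Φ (F z) r / linCon univ Φ (F z) r ≤ ediam (Φ '' C) / c :=
  (ENNReal.div_le_div (h.linDil_univ_le hz hball hrd)
    (h.le_linCon_univ hΦ hz hball hmd hrm hc)).trans_eq
    (ENNReal.mul_div_mul_left _ _ (ENNReal.ofReal_ne_zero_iff.2 h.right.1) ENNReal.ofReal_ne_top)

end SimilarityConjugacy

variable {ι : Type*} {f g : ι → X → X} {rf rg : ι → ℝ} {ρ m : ℝ}

/-- Renormalization: a composition of the `f i` has an inverse that blows a given small scale at a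
point of `K` up to one between `m * d` and `d`. -/
theorem exists_similarityConjugacy_scale {Φ : X → X} {C K : Set X}
    (h : ∀ i, SimilarityConjugacy Φ C (f i) (g i) (rf i) (rg i)) (hρ : ∀ i, rf i ≤ ρ)
    (hm : ∀ i, m ≤ rf i) (hK : ∀ x ∈ K, ∃ i, ∃ y ∈ K, f i y = x) {d : ℝ}
    (hd : 0 < d) (k : ℕ) {r : ℝ} (hr : 0 < r) (hrd : r ≤ d) (hk : ρ ^ k * d < r) {x : X}
    (hx : x ∈ K) : ∃ F G s t, ∃ z ∈ K, SimilarityConjugacy Φ C F G s t ∧ F z = x ∧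
      r ≤ s * d ∧ s * (m * d) ≤ r := by
  induction k generalizing r x with
  | zero => exact absurd hk (by simpa using hrd)
  | succ k ih =>
    by_cases hmr : m * d ≤ r
    · exact ⟨id, id, 1, 1, x, hx, .id Φ C, rfl, by rwa [one_mul], by rwa [one_mul]⟩
    obtain ⟨i, y, hy, rfl⟩ := hK x hx
    have hi := (h i).left.1
    have hle : r / rf i ≤ d := by
      rw [div_le_iff₀' hi]
      exact (not_le.1 hmr).le.trans (by gcongr; exact hm i)
    have hlt : ρ ^ k * d < r / rf i := by
      rw [lt_div_iff₀' hi]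
      refine lt_of_le_of_lt ?_ hk
      have := hi.le.trans (hρ i)
      rw [pow_succ', mul_assoc]
      gcongr
      exact hρ i
    obtain ⟨F, G, s, t, z, hz, hFG, rfl, hrs, hsr⟩ := ih (div_pos hr hi) hle hlt hy
    refine ⟨f i ∘ F, g i ∘ G, rf i * s, rg i * t, z, hz, (h i).comp hFG, rfl, ?_, ?_⟩
    · rwa [mul_assoc, ← div_le_iff₀' hi]
    · rwa [mul_assoc, ← le_div_iff₀' hi]

theorem exists_forall_qcH_univ_le_of_similarityConjugacy [ProperSpace X] {Φ : X ≃ₜ X}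
    {C K : Set X} (h : ∀ i, SimilarityConjugacy Φ C (f i) (g i) (rf i) (rg i))
    (hρ : ∀ i, rf i ≤ ρ) (hρ1 : ρ < 1) (hm : ∀ i, m ≤ rf i) (hm0 : 0 < m) (hm1 : m < 1)
    (hK : IsCompact K) (hKf : ∀ x ∈ K, ∃ i, ∃ y ∈ K, f i y = x) (hC : Bornology.IsBounded C)
    (hKC : K ⊆ interior C) : ∃ H : ℝ≥0∞, H ≠ ∞ ∧ ∀ x ∈ K, qcH univ Φ x ≤ H := by
  obtain ⟨d, hd, hdC⟩ := hK.exists_cthickening_subset_open isOpen_interior hKC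
  obtain ⟨c, hc, hfar⟩ := exists_pos_forall_le_edist Φ hK (mul_pos hm0 hd)
  have hdiam : ediam (Φ '' C) ≠ ∞ := isBounded_iff_ediam_ne_top.1 <|
    (hC.isCompact_closure.image Φ.continuous).isBounded.subset (image_mono subset_closure)
  refine ⟨ediam (Φ '' C) / c, ENNReal.div_ne_top hdiam hc.ne', fun x hx ↦ limsup_le_of_le
    isCobounded_le_of_bot ?_⟩
  filter_upwards [Ioo_mem_nhdsGT hd] with r hr
  obtain ⟨k, hk⟩ := exists_pow_lt_of_lt_one (div_pos hr.1 hd) hρ1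
  obtain ⟨F, G, s, t, z, hz, hFG, rfl, hrs, hsr⟩ := exists_similarityConjugacy_scale h hρ hm
    hKf hd k hr.1 hr.2.le ((lt_div_iff₀ hd).1 hk) hx
  have hball : closedBall z d ⊆ C :=
    (closedBall_subset_cthickening hz d).trans (hdC.trans interior_subset)
  exact hFG.linDil_div_linCon_le Φ.bijective (interior_subset (hKC hz)) hball
    (mul_le_of_le_one_left hd.le hm1.le) hrs hsr (hfar z hz)

end DilatationOnInvariantSet

section Quasiconformality

variable {ι : Type*} [Finite ι]

theorem exists_nnreal_lt_one_forall_le {r : ι → ℝ} (hr : ∀ i, r i < 1) :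
    ∃ ρ : ℝ≥0, ρ < 1 ∧ ∀ i, r i ≤ ρ := by
  have hle : ∀ᶠ ρ in 𝓝[<] (1 : ℝ), ∀ i, r i ≤ ρ :=
    eventually_all.2 fun i ↦ mem_nhdsWithin_of_mem_nhds (Ici_mem_nhds (hr i))
  obtain ⟨ρ, hle, hρ⟩ := (hle.and (Ioo_mem_nhdsLT zero_lt_one)).exists
  exact ⟨⟨ρ, hρ.1.le⟩, hρ.2, hle⟩

theorem exists_pos_lt_one_forall_le {r : ι → ℝ} (hr : ∀ i, 0 < r i) :
    ∃ m, 0 < m ∧ m < 1 ∧ ∀ i, m ≤ r i := by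
  have hle : ∀ᶠ m in 𝓝[>] (0 : ℝ), ∀ i, m ≤ r i :=
    eventually_all.2 fun i ↦ mem_nhdsWithin_of_mem_nhds (Iic_mem_nhds (hr i))
  obtain ⟨m, hle, hm⟩ := (hle.and (Ioo_mem_nhdsGT zero_lt_one)).exists
  exact ⟨m, hm.1, hm.2, hle⟩

theorem PastingProblem.quasiconformalOn_univ {X : Type*} [MetricSpace X] [ProperSpace X]
    {f g : ι → X → X} {Q S : Set X} {e : PartialHomeomorph X X} {Φ : X ≃ₜ X}
    (h : PastingProblem f g Q S e) (hΦe : EqOn Φ e (hutchinson f Q)ᶜ)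
    (hΦ : ∀ i, ∀ x ∈ closure Q, Φ (f i x) = g i (Φ x)) {rf rg : ι → ℝ}
    (hf : ∀ i, IsSimilarityWith (rf i) (f i)) (hrf : ∀ i, rf i < 1)
    (hg : ∀ i, IsSimilarityWith (rg i) (g i)) (he : QuasiconformalOn (hutchinson f Q)ᶜ e) :
    QuasiconformalOn univ Φ := by
  have hsep := h.separatedSystem
  obtain ⟨H, hH, hqc⟩ := he
  obtain ⟨ρ, hρ1, hρ⟩ := exists_nnreal_lt_one_forall_le hrf
  obtain ⟨m, hm0, hm1, hm⟩ := exists_pos_lt_one_forall_le fun i ↦ (hf i).1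
  have hconj (i : ι) : SimilarityConjugacy Φ (closure Q) (f i) (g i) (rf i) (rg i) :=
    ⟨hf i, hg i, (hsep.isHomeomorph i).surjective, (h.isHomeomorph i).surjective,
      fun x hx ↦ subset_closure (hsep.apply_mem i hx), hΦ i⟩
  obtain ⟨H', hH', hK⟩ := exists_forall_qcH_univ_le_of_similarityConjugacy hconj hρ hρ1 hm hm0 hm1
    hsep.isCompact_invariantSet (fun x hx ↦ hsep.exists_mem_invariantSet_apply_eq hx)
    hsep.isBounded.closure
    ((invariantSet_subset hsep.strongSeparation.1).trans (hsep.isOpen.subset_interior_closure))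
  refine quasiconformalOn_of_forall_qcH_le (H := max (ENNReal.ofReal H) H')
    (max_lt ENNReal.ofReal_lt_top hH'.lt_top).ne fun x _ ↦ ?_
  by_cases hx : x ∈ invariantSet f Q
  · exact le_max_of_le_right (hK x hx)
  · exact le_max_of_le_left (h.qcH_univ_le_of_notMem_invariantSet hΦe hΦ hf hg
      (ENNReal.one_le_ofReal.2 hH) hqc hx)

end Quasiconformality

theorem lipschitzWith_of_isSimilarityWith {X : Type*} [MetricSpace X] {f : X → X} {r : ℝ} {ρ : ℝ≥0}
    (hf : IsSimilarityWith r f) (hr : r ≤ ρ) : LipschitzWith ρ f :=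
  .of_dist_le_mul fun x y ↦ (hf.2 x y).trans_le (by gcongr)

theorem exists_pastingProblem {E ι : Type*} [MetricSpace E] [Nonempty E] {f g : ι → E → E}
    {Q S : Set E} {φ : E → E} (hQ : SeparatedSystem f Q) (hg : ∀ i, IsHomeomorph (g i))
    (hSo : IsOpen S) (hSb : Bornology.IsBounded S)
    (hφ : IsHomeoOn φ (hutchinson f Q)ᶜ (hutchinson g S)ᶜ)
    (hcomm : ∃ ε > 0, ∀ y ∉ Q, infDist y Q ≤ ε → ∀ i, φ (f i y) = g i (φ y)) :
    ∃ e, PastingProblem f g Q S e ∧ ⇑e = φ := by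
  obtain ⟨e, hsource, htarget, rfl⟩ := exists_partialHomeomorph_of_isHomeoOn hφ
  obtain ⟨ε, hε, hcomm⟩ := hcomm
  exact ⟨e, ⟨hQ, hg, hSo, hSb, hsource, htarget,
    fun i _ hx ↦ eventually_comm_of_infDist_le hε hcomm i hx⟩, rfl⟩

theorem qc_pasting_general {E : Type*} [NormedAddCommGroup E] [NormedSpace ℝ E]
    [FiniteDimensional ℝ E] [Nontrivial E] {ι : Type*} [Finite ι] {f g : ι → E → E}
    {rf rg : ι → ℝ} (hf : ∀ i, IsSimilarityWith (rf i) (f i)) (hrf : ∀ i, rf i < 1)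
    (hg : ∀ i, IsSimilarityWith (rg i) (g i)) (hrg : ∀ i, rg i < 1) {Q S : Set E}
    (hQo : IsOpen Q) (hQb : Bornology.IsBounded Q) (hSo : IsOpen S) (hSb : Bornology.IsBounded S)
    (hQ : StrongSeparation f Q) (hS : ∀ i, g i '' closure S ⊆ S) {φ : E → E}
    (hφ : IsHomeoOn φ (⋃ i, f i '' Q)ᶜ (⋃ i, g i '' S)ᶜ)
    (hφ_qc : QuasiconformalOn (⋃ i, f i '' Q)ᶜ φ)
    (hcomm : ∃ ε > 0, ∀ y ∉ Q, infDist y Q ≤ ε → ∀ i, φ (f i y) = g i (φ y)) :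
    ∃ Φ : E ≃ₜ E, QuasiconformalOn univ Φ ∧ (∀ x ∈ (⋃ i, f i '' Q)ᶜ, Φ x = φ x) ∧
      (∀ i, ∀ x ∈ closure Q, Φ (f i x) = g i (Φ x)) ∧
      Φ '' invariantSet f Q = invariantSet g S := by
  have := FiniteDimensional.proper ℝ E
  have hsep : SeparatedSystem f Q := ⟨fun i ↦ isHomeomorph_of_isSimilarityWith (hf i), hQo, hQb, hQ⟩
  obtain ⟨e, h, rfl⟩ := exists_pastingProblem hsep
    (fun i ↦ isHomeomorph_of_isSimilarityWith (hg i)) hSo hSb hφ hcomm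
  obtain ⟨ρf, hρf1, hρf⟩ := exists_nnreal_lt_one_forall_le hrf
  obtain ⟨ρg, hρg1, hρg⟩ := exists_nnreal_lt_one_forall_le hrg
  obtain ⟨Φ, hΦe, hΦ⟩ := h.frontierConjugacy.exists_homeomorph (max_lt hρf1 hρg1)
    (fun i ↦ (lipschitzWith_of_isSimilarityWith (hf i) (hρf i)).weaken (le_max_left _ _))
    (fun i ↦ (lipschitzWith_of_isSimilarityWith (hg i) (hρg i)).weaken (le_max_right _ _))
  exact ⟨Φ, h.quasiconformalOn_univ hΦe hΦ hf hrf hg hφ_qc, hΦe, hΦ,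
    image_invariantSet Φ.bijective hQ.1 hS hΦ (h.image_hutchinson_closure hΦe)⟩

/-- **Quasiconformal pasting.** Given iterated function systems `𝓘 = {f i}`, `𝓙 = {g i}`
of contracting similarities of `ℝⁿ` satisfying the strong separation condition on bounded
open sets `Q`, `S`, and a quasiconformal homeomorphism
`φ : ℝⁿ \ ⋃ᵢ fᵢ(Q) → ℝⁿ \ ⋃ᵢ gᵢ(S)` satisfying the compatibility condition, there exists a
quasiconformal homeomorphism `Φ : ℝⁿ → ℝⁿ` agreeing with `φ` off `⋃ᵢ fᵢ(Q)`, with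
`Φ ∘ fᵢ = gᵢ ∘ Φ` on the closure of `Q`, and mapping `K_𝓘` onto `K_𝓙`. -/
theorem qc_pasting
    (n N : ℕ) (hn : 2 ≤ n) (hN : 0 < N)
    (f g : Fin N → EuclideanSpace ℝ (Fin n) → EuclideanSpace ℝ (Fin n))
    (rf rg : Fin N → ℝ)
    (hf : ∀ i, IsSimilarityWith (rf i) (f i)) (hrf : ∀ i, rf i < 1)
    (hg : ∀ i, IsSimilarityWith (rg i) (g i)) (hrg : ∀ i, rg i < 1)
    (Q S : Set (EuclideanSpace ℝ (Fin n)))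
    (hQo : IsOpen Q) (hQb : Bornology.IsBounded Q)
    (hSo : IsOpen S) (hSb : Bornology.IsBounded S)
    (hsepQ : StrongSeparation f Q) (hsepS : StrongSeparation g S)
    (φ : EuclideanSpace ℝ (Fin n) → EuclideanSpace ℝ (Fin n))
    (hφ_homeo : IsHomeoOn φ (⋃ i, f i '' Q)ᶜ (⋃ i, g i '' S)ᶜ)
    (hφ_qc : QuasiconformalOn (⋃ i, f i '' Q)ᶜ φ)
    (hφ_compat : ∃ ε > 0, ∀ y ∉ Q, Metric.infDist y Q ≤ ε →
      ∀ i, φ (f i y) = g i (φ y)) :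
    ∃ Φ : EuclideanSpace ℝ (Fin n) ≃ₜ EuclideanSpace ℝ (Fin n),
      QuasiconformalOn Set.univ ⇑Φ ∧
      (∀ x ∈ (⋃ i, f i '' Q)ᶜ, Φ x = φ x) ∧
      (∀ i, ∀ x ∈ closure Q, Φ (f i x) = g i (Φ x)) ∧
      ⇑Φ '' invariantSet f Q = invariantSet g S := by
  have : NeZero n := ⟨by omega⟩
  exact qc_pasting_general hf hrf hg hrg hQo hQb hSo hSb hsepQ hsepS.1 hφ_homeo hφ_qc hφ_compat
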